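/- Let φ ∈ 𝒮(ℝ^n) with φ̂(0) = 1. Then there exists a constant C > 0, depending only on n and φ, such that for every b ∈ BMO(ℝ^n) and every cube Q ⊂ ℝ^n with side length ℓ(Q), Σ_{k∈ℤ : 2^k ≤ ℓ(Q)} ∫_Q |Φ_k b(x) − E_k b(x)|² dx ≤ C ‖b‖_{BMO}² |Q|. Equivalently, dν(x,t) = Σ_{k∈ℤ} |Φ_k b(x) − E_k b(x)|² dx δ_{2^k}(t) is a Carleson measure on ℝ^{n+1}_+ with norm at most C‖b‖_{BMO}². -/

import Mathlib

open MeasureTheory ENNReal NNReal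
noncomputable section

/-- The dyadic cube of side length `2^j` (from the grid `∏ (m_i 2^j, (m_i+1) 2^j]`)
containing the point `x`. -/
def dyadicCubeOf (n : ℕ) (j : ℤ) (x : EuclideanSpace ℝ (Fin n)) :
    Set (EuclideanSpace ℝ (Fin n)) :=
  {y | ∀ i, ((⌈x i / (2:ℝ) ^ j⌉ : ℝ) - 1) * (2:ℝ) ^ j < y i ∧
        y i ≤ (⌈x i / (2:ℝ) ^ j⌉ : ℝ) * (2:ℝ) ^ j}

/-- The dyadic conditional expectation `E_j f (x)`: the average of `f` over the dyadic
cube of side length `2^j` containing `x`. -/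
def dyadicAvg (n : ℕ) (j : ℤ) (f : EuclideanSpace ℝ (Fin n) → ℝ)
    (x : EuclideanSpace ℝ (Fin n)) : ℝ :=
  ⨍ y in dyadicCubeOf n j x, f y

/-- The (half-open) cube with corner `a` and side length `ℓ`. -/
def cube (n : ℕ) (a : EuclideanSpace ℝ (Fin n)) (ℓ : ℝ) :
    Set (EuclideanSpace ℝ (Fin n)) :=
  {y | ∀ i, a i < y i ∧ y i ≤ a i + ℓ}

/-- `t : ℝⁿ → ℤ` is a dyadic stopping time: it is measurable and each level set
`{t = j}` is a union of dyadic cubes in `𝒟_j`, i.e. `t` is constant on the dyadic cube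
of scale `t x` containing `x`. -/
def IsDyadicStopping (n : ℕ) (t : EuclideanSpace ℝ (Fin n) → ℤ) : Prop :=
  Measurable t ∧ ∀ x y, y ∈ dyadicCubeOf n (t x) x → t y = t x

/-- `Φ_k g = φ_k ∗ g` where `φ_k(x) = 2^{-kn} φ(2^{-k} x)`. -/
def schwartzConv (n : ℕ) (φ : SchwartzMap (EuclideanSpace ℝ (Fin n)) ℝ) (k : ℤ)
    (g : EuclideanSpace ℝ (Fin n) → ℝ) (x : EuclideanSpace ℝ (Fin n)) : ℝ :=
  ∫ y, (2:ℝ) ^ (-(k * (n:ℤ))) * φ ((2:ℝ) ^ (-k) • (x - y)) * g y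

/- Let `Q* = 3Q` and split `b - b_{Q*}` into its parts on and off `Q*`.
The kernels of `D_k = Φ_k - E_k` have vanishing integral because `∫ φ = 1`, and their translation
modulus in `L¹` is `O(|h| / 2^k)`: for `Φ_k` by smoothness of `φ`, and for `E_k` because a dyadic
cube of side `2^k` differs little from its translates. Hence `‖D_j D_k†‖ ≲ 2^{-|j - k| / 2}`, and
the Cotlar–Stein argument bounds `∑_k ‖D_k f‖₂²` by a multiple of `‖f‖₂²`. The part on `Q*` thus
costs `‖(b - b_{Q*}) 1_{Q*}‖₂² ≲ ‖b‖_{BMO}² |Q|`, a John–Nirenberg bound at exponent two.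
Off `Q*`, for `2^k ≤ ℓ(Q)`, the average `E_k` contributes nothing on `Q`, and the decay of `φ` over
the rings `2^{i+1} Q* \ 2^i Q*` leaves `O((2^k / ℓ(Q))² ‖b‖_{BMO})`, whose squares sum over `k`. -/

section Cubes

variable {n : ℕ} {a x y : EuclideanSpace ℝ (Fin n)} {ℓ : ℝ} {l m : ℤ}

lemma norm_le_card_mul_of_forall_abs_le {z : EuclideanSpace ℝ (Fin n)} {r : ℝ}
    (h : ∀ i, |z i| ≤ r) : ‖z‖ ≤ n * r := by
  calc ‖z‖ = ‖∑ i, z i • EuclideanSpace.basisFun (Fin n) ℝ i‖ := by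
        congr 1
        simpa using ((EuclideanSpace.basisFun (Fin n) ℝ).sum_repr z).symm
    _ ≤ ∑ i, |z i| := (norm_sum_le _ _).trans_eq (by simp [norm_smul])
    _ ≤ n * r := by
        simpa using Finset.sum_le_card_nsmul Finset.univ (fun i => |z i|) r fun i _ => h i

lemma cube_eq_preimage_pi (a : EuclideanSpace ℝ (Fin n)) (ℓ : ℝ) :
    cube n a ℓ = WithLp.ofLp ⁻¹' Set.univ.pi fun i => Set.Ioc (a i) (a i + ℓ) := by
  ext y
  simp [cube]

lemma measurableSet_cube (a : EuclideanSpace ℝ (Fin n)) (ℓ : ℝ) : MeasurableSet (cube n a ℓ) := by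
  rw [cube_eq_preimage_pi]
  exact (PiLp.volume_preserving_ofLp (Fin n)).measurable
    (MeasurableSet.univ_pi fun _ => measurableSet_Ioc)

lemma volume_cube (a : EuclideanSpace ℝ (Fin n)) (ℓ : ℝ) :
    volume (cube n a ℓ) = ENNReal.ofReal ℓ ^ n := by
  rw [cube_eq_preimage_pi, (PiLp.volume_preserving_ofLp (Fin n)).measure_preimage
    (MeasurableSet.univ_pi fun _ => measurableSet_Ioc).nullMeasurableSet, volume_pi_pi]
  simp [Real.volume_Ioc]

lemma volume_cube_ne_zero (a : EuclideanSpace ℝ (Fin n)) (hℓ : 0 < ℓ) :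
    volume (cube n a ℓ) ≠ 0 := by
  simp [volume_cube, hℓ]

lemma volume_cube_ne_top (a : EuclideanSpace ℝ (Fin n)) (ℓ : ℝ) : volume (cube n a ℓ) ≠ ∞ := by
  simp [volume_cube]

lemma norm_sub_le_of_mem_cube (hx : x ∈ cube n a ℓ) (hy : y ∈ cube n a ℓ) : ‖x - y‖ ≤ n * ℓ :=
  norm_le_card_mul_of_forall_abs_le fun i => by
    rw [PiLp.sub_apply, abs_le]
    constructor <;> linarith [hx i, hy i]

lemma isBounded_cube (a : EuclideanSpace ℝ (Fin n)) (ℓ : ℝ) : Bornology.IsBounded (cube n a ℓ) :=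
  Metric.isBounded_iff.2 ⟨n * ℓ, fun _ hx _ hy => by
    rw [dist_eq_norm]; exact norm_sub_le_of_mem_cube hx hy⟩

lemma integrableOn_cube {b : EuclideanSpace ℝ (Fin n) → ℝ}
    (hb : LocallyIntegrable b) (a : EuclideanSpace ℝ (Fin n)) (ℓ : ℝ) :
    IntegrableOn b (cube n a ℓ) :=
  (hb.integrableOn_isCompact (isBounded_cube a ℓ).isCompact_closure).mono_set subset_closure

/-- The upper corner, in units of `2^j`, of the dyadic cube of side length `2^j` containing `x`; it
labels the cubes of that generation by `ℤⁿ`. -/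
def dyadicIndex (n : ℕ) (j : ℤ) (x : EuclideanSpace ℝ (Fin n)) : Fin n → ℤ :=
  fun i => ⌈x i / (2 : ℝ) ^ j⌉

lemma measurable_dyadicIndex (n : ℕ) (m : ℤ) : Measurable (dyadicIndex n m) :=
  measurable_pi_lambda _ fun i =>
    Int.measurable_ceil.comp
      (by fun_prop : Measurable fun x : EuclideanSpace ℝ (Fin n) => x i / 2 ^ m)

lemma mem_dyadicCubeOf_iff : y ∈ dyadicCubeOf n m x ↔ dyadicIndex n m y = dyadicIndex n m x := by
  have h2 : (0 : ℝ) < 2 ^ m := by positivity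
  simp only [dyadicCubeOf, Set.mem_ofPred_eq, dyadicIndex, funext_iff, Int.ceil_eq_iff,
    lt_div_iff₀ h2, div_le_iff₀ h2]

lemma dyadicCubeOf_eq_preimage (n : ℕ) (m : ℤ) (x : EuclideanSpace ℝ (Fin n)) :
    dyadicCubeOf n m x = dyadicIndex n m ⁻¹' {dyadicIndex n m x} := by
  ext y
  simp [mem_dyadicCubeOf_iff]

lemma mem_dyadicCubeOf_self (m : ℤ) (x : EuclideanSpace ℝ (Fin n)) : x ∈ dyadicCubeOf n m x :=
  mem_dyadicCubeOf_iff.2 rfl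

lemma mem_dyadicCubeOf_comm : y ∈ dyadicCubeOf n m x ↔ x ∈ dyadicCubeOf n m y := by
  rw [mem_dyadicCubeOf_iff, mem_dyadicCubeOf_iff, eq_comm]

lemma dyadicCubeOf_eq_of_mem (h : y ∈ dyadicCubeOf n m x) :
    dyadicCubeOf n m y = dyadicCubeOf n m x := by
  rw [dyadicCubeOf_eq_preimage, mem_dyadicCubeOf_iff.1 h, ← dyadicCubeOf_eq_preimage]

lemma measurableSet_setOf_mem_dyadicCubeOf (n : ℕ) (m : ℤ) :
    MeasurableSet {p : EuclideanSpace ℝ (Fin n) × EuclideanSpace ℝ (Fin n) |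
      p.2 ∈ dyadicCubeOf n m p.1} := by
  simp only [mem_dyadicCubeOf_iff]
  exact measurableSet_eq_fun ((measurable_dyadicIndex n m).comp measurable_snd)
    ((measurable_dyadicIndex n m).comp measurable_fst)

lemma measurable_of_forall_mem_dyadicCubeOf {β : Type*} [MeasurableSpace β]
    {f : EuclideanSpace ℝ (Fin n) → β} (hf : ∀ x y, y ∈ dyadicCubeOf n m x → f y = f x) :
    Measurable f := by
  have h_factor : f = (fun k => f (Function.invFun (dyadicIndex n m) k)) ∘ dyadicIndex n m := by
    funext x
    exact (hf _ _ (mem_dyadicCubeOf_iff.2 (Function.invFun_eq ⟨x, rfl⟩))).symm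
  rw [h_factor]
  exact (Measurable.of_discrete).comp (measurable_dyadicIndex n m)

lemma dyadicCubeOf_eq_cube (n : ℕ) (m : ℤ) (x : EuclideanSpace ℝ (Fin n)) :
    dyadicCubeOf n m x =
      cube n (WithLp.toLp 2 fun i => ((⌈x i / (2 : ℝ) ^ m⌉ : ℝ) - 1) * 2 ^ m) (2 ^ m) := by
  ext y
  simp only [dyadicCubeOf, cube, Set.mem_ofPred_eq]
  refine forall_congr' fun i => ?_
  rw [sub_mul, one_mul, sub_add_cancel]

lemma measurableSet_dyadicCubeOf (n : ℕ) (m : ℤ) (x : EuclideanSpace ℝ (Fin n)) :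
    MeasurableSet (dyadicCubeOf n m x) := by
  rw [dyadicCubeOf_eq_cube]
  exact measurableSet_cube _ _

lemma volume_dyadicCubeOf (n : ℕ) (m : ℤ) (x : EuclideanSpace ℝ (Fin n)) :
    volume (dyadicCubeOf n m x) = ENNReal.ofReal (2 ^ m) ^ n := by
  rw [dyadicCubeOf_eq_cube, volume_cube]

lemma volume_dyadicCubeOf_ne_zero (n : ℕ) (m : ℤ) (x : EuclideanSpace ℝ (Fin n)) :
    volume (dyadicCubeOf n m x) ≠ 0 := by
  rw [dyadicCubeOf_eq_cube]
  exact volume_cube_ne_zero _ (by positivity)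

lemma volume_dyadicCubeOf_ne_top (n : ℕ) (m : ℤ) (x : EuclideanSpace ℝ (Fin n)) :
    volume (dyadicCubeOf n m x) ≠ ∞ := by
  rw [dyadicCubeOf_eq_cube]
  exact volume_cube_ne_top _ _

lemma volume_dyadicCubeOf_succ (n : ℕ) (m : ℤ) (x : EuclideanSpace ℝ (Fin n)) :
    volume (dyadicCubeOf n (m + 1) x) = 2 ^ n * volume (dyadicCubeOf n m x) := by
  rw [volume_dyadicCubeOf, volume_dyadicCubeOf, zpow_add_one₀ two_ne_zero, mul_comm,
    ENNReal.ofReal_mul two_pos.le, mul_pow, ENNReal.ofReal_ofNat]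

lemma norm_sub_le_of_mem_dyadicCubeOf (h : y ∈ dyadicCubeOf n m x) : ‖y - x‖ ≤ n * 2 ^ m := by
  have hx := mem_dyadicCubeOf_self m x
  rw [dyadicCubeOf_eq_cube] at h hx
  exact norm_sub_le_of_mem_cube h hx

lemma ceil_div_natCast_eq_of_ceil_eq {s t : ℝ} {N : ℕ} (hN : 0 < N) (h : ⌈s⌉ = ⌈t⌉) :
    ⌈s / N⌉ = ⌈t / N⌉ := by
  have h_iff (u : ℝ) (c : ℤ) : ⌈u / N⌉ ≤ c ↔ ⌈u⌉ ≤ c * N := by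
    rw [Int.ceil_le, Int.ceil_le, div_le_iff₀ (by exact_mod_cast hN)]
    push_cast
    rfl
  exact eq_of_forall_ge_iff fun c => by rw [h_iff, h_iff, h]

lemma dyadicCubeOf_mono (hlm : l ≤ m) (x : EuclideanSpace ℝ (Fin n)) :
    dyadicCubeOf n l x ⊆ dyadicCubeOf n m x := by
  obtain ⟨k, rfl⟩ := Int.le.dest hlm
  intro y hy
  rw [mem_dyadicCubeOf_iff] at hy ⊢
  funext i
  have h_div (u : ℝ) : u / (2 : ℝ) ^ (l + k) = u / 2 ^ l / (2 ^ k : ℕ) := by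
    rw [zpow_add₀ two_ne_zero, zpow_natCast, div_div]
    norm_cast
  simp only [dyadicIndex, h_div]
  exact ceil_div_natCast_eq_of_ceil_eq (by positivity) (congr_fun hy i)

lemma dyadicCubeOf_subset_of_mem (hlm : l ≤ m) (h : y ∈ dyadicCubeOf n m x) :
    dyadicCubeOf n l y ⊆ dyadicCubeOf n m x :=
  dyadicCubeOf_eq_of_mem h ▸ dyadicCubeOf_mono hlm y

lemma disjoint_dyadicCubeOf_of_notMem (hlm : l ≤ m) (h : y ∉ dyadicCubeOf n m x) :
    Disjoint (dyadicCubeOf n l y) (dyadicCubeOf n m x) :=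
  Set.disjoint_left.2 fun z hzy hzx => h <| by
    rw [← dyadicCubeOf_eq_of_mem hzx]
    exact mem_dyadicCubeOf_comm.1 (dyadicCubeOf_mono hlm y hzy)

end Cubes

section Averages

variable {α : Type*} [MeasurableSpace α] {μ : Measure α} {s t : Set α} {u v : α → ℝ≥0∞}

lemma setLAverage_mono_of_forall_mem (hs : MeasurableSet s) (huv : ∀ x ∈ s, u x ≤ v x) :
    ⨍⁻ x in s, u x ∂μ ≤ ⨍⁻ x in s, v x ∂μ :=
  laverage_mono_ae (ae_restrict_of_forall_mem hs huv)

lemma setLAverage_le_of_forall_mem_le {c : ℝ≥0∞} (hs : MeasurableSet s) (hu : ∀ x ∈ s, u x ≤ c) :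
    ⨍⁻ x in s, u x ∂μ ≤ c := by
  rw [setLAverage_eq]
  exact ENNReal.div_le_of_le_mul ((setLIntegral_mono' hs hu).trans_eq (setLIntegral_const _ _))

lemma setLAverage_const_add (hs₀ : μ s ≠ 0) (hs : μ s ≠ ∞) (c : ℝ≥0∞) (u : α → ℝ≥0∞) :
    ⨍⁻ x in s, (c + u x) ∂μ = c + ⨍⁻ x in s, u x ∂μ := by
  rw [laverage, lintegral_add_left measurable_const]
  exact congr_arg (· + _) (setLAverage_const hs₀ hs c)

lemma setLAverage_const_mul {c : ℝ≥0∞} (hc : c ≠ ∞) (u : α → ℝ≥0∞) :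
    ⨍⁻ x in s, c * u x ∂μ = c * ⨍⁻ x in s, u x ∂μ :=
  lintegral_const_mul' c u hc

lemma setLAverage_le_mul_of_subset {C : ℝ≥0∞} (hst : s ⊆ t) (ht₀ : μ t ≠ 0) (ht : μ t ≠ ∞)
    (hC : μ t ≤ C * μ s) (u : α → ℝ≥0∞) :
    ⨍⁻ x in s, u x ∂μ ≤ C * ⨍⁻ x in t, u x ∂μ := by
  have h_inv : (μ s)⁻¹ ≤ C * (μ t)⁻¹ := by
    rw [← div_eq_mul_inv, ENNReal.le_div_iff_mul_le (.inl ht₀) (.inl ht), mul_comm,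
      ← div_eq_mul_inv]
    exact ENNReal.div_le_of_le_mul hC
  rw [setLAverage_eq, setLAverage_eq, div_eq_mul_inv, div_eq_mul_inv]
  calc (∫⁻ x in s, u x ∂μ) * (μ s)⁻¹ ≤ (∫⁻ x in t, u x ∂μ) * (C * (μ t)⁻¹) := by gcongr
    _ = C * ((∫⁻ x in t, u x ∂μ) * (μ t)⁻¹) := mul_left_comm _ _ _

lemma setAverage_sub_const {f : α → ℝ} (hf : IntegrableOn f s μ) (hs₀ : μ s ≠ 0) (hs : μ s ≠ ∞)
    (c : ℝ) : ⨍ x in s, (f x - c) ∂μ = (⨍ x in s, f x ∂μ) - c := by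
  have : IsFiniteMeasure (μ.restrict s) := ⟨by simpa using hs.lt_top⟩
  rw [average, integral_sub (hf.smul_measure (by simpa)) (integrable_const c)]
  exact congr_arg (_ - ·) (setAverage_const hs₀ hs c)

lemma enorm_setAverage_sub_le {f : α → ℝ} (hf : IntegrableOn f s μ) (hs₀ : μ s ≠ 0) (hs : μ s ≠ ∞)
    (c : ℝ) : ‖(⨍ x in s, f x ∂μ) - c‖ₑ ≤ ⨍⁻ x in s, ‖f x - c‖ₑ ∂μ := by
  rw [← setAverage_sub_const hf hs₀ hs c]
  exact enorm_integral_le_lintegral_enorm _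

end Averages

section DyadicAverages

variable {n : ℕ} {l m : ℤ} {b : EuclideanSpace ℝ (Fin n) → ℝ} {u : EuclideanSpace ℝ (Fin n) → ℝ≥0∞}

lemma dyadicAvg_eq_of_mem {x y : EuclideanSpace ℝ (Fin n)} (b : EuclideanSpace ℝ (Fin n) → ℝ)
    (h : y ∈ dyadicCubeOf n m x) : dyadicAvg n m b y = dyadicAvg n m b x := by
  rw [dyadicAvg, dyadicCubeOf_eq_of_mem h, dyadicAvg]

lemma measurable_dyadicAvg (n : ℕ) (m : ℤ) (b : EuclideanSpace ℝ (Fin n) → ℝ) :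
    Measurable (dyadicAvg n m b) :=
  measurable_of_forall_mem_dyadicCubeOf fun _ _ => dyadicAvg_eq_of_mem b

lemma lintegral_setLIntegral_dyadicCubeOf (hlm : l ≤ m) (hu : AEMeasurable u)
    (x : EuclideanSpace ℝ (Fin n)) :
    ∫⁻ z in dyadicCubeOf n m x, ∫⁻ y in dyadicCubeOf n l z, u y =
      (∫⁻ y in dyadicCubeOf n m x, u y) * volume (dyadicCubeOf n l x) := by
  set F : EuclideanSpace ℝ (Fin n) → EuclideanSpace ℝ (Fin n) → ℝ≥0∞ := fun z y =>
    {p : EuclideanSpace ℝ (Fin n) × EuclideanSpace ℝ (Fin n) |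
      p.2 ∈ dyadicCubeOf n l p.1}.indicator (fun p => u p.2) (z, y)
  have hF_left (z) : ∫⁻ y in dyadicCubeOf n l z, u y = ∫⁻ y, F z y := by
    rw [← lintegral_indicator (measurableSet_dyadicCubeOf n l z)]
    rfl
  have hF_right (y) : ∫⁻ z in dyadicCubeOf n m x, F z y =
      (dyadicCubeOf n m x).indicator (fun y => u y * volume (dyadicCubeOf n l x)) y := by
    have hF : (fun z => F z y) = (dyadicCubeOf n l y).indicator fun _ => u y := by
      funext z
      exact Set.indicator_eq_indicator mem_dyadicCubeOf_comm rfl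
    rw [hF, lintegral_indicator_const (measurableSet_dyadicCubeOf n l y),
      Measure.restrict_apply (measurableSet_dyadicCubeOf n l y)]
    by_cases hy : y ∈ dyadicCubeOf n m x
    · rw [Set.indicator_of_mem hy, Set.inter_eq_left.2 (dyadicCubeOf_subset_of_mem hlm hy),
        volume_dyadicCubeOf, volume_dyadicCubeOf]
    · rw [Set.indicator_of_notMem hy,
        (disjoint_dyadicCubeOf_of_notMem hlm hy).inter_eq, measure_empty, mul_zero]
  calc ∫⁻ z in dyadicCubeOf n m x, ∫⁻ y in dyadicCubeOf n l z, u y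
      = ∫⁻ y, ∫⁻ z in dyadicCubeOf n m x, F z y := by
        simp only [hF_left]
        exact lintegral_lintegral_swap <|
          hu.comp_snd.indicator (measurableSet_setOf_mem_dyadicCubeOf n l)
    _ = (∫⁻ y in dyadicCubeOf n m x, u y) * volume (dyadicCubeOf n l x) := by
        simp only [hF_right]
        rw [lintegral_indicator (measurableSet_dyadicCubeOf n m x),
          lintegral_mul_const' _ _ (volume_dyadicCubeOf_ne_top n l x)]

lemma setLAverage_setLAverage_dyadicCubeOf (hlm : l ≤ m) (hu : AEMeasurable u)
    (x : EuclideanSpace ℝ (Fin n)) :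
    ⨍⁻ z in dyadicCubeOf n m x, (⨍⁻ y in dyadicCubeOf n l z, u y ∂volume) ∂volume =
      ⨍⁻ y in dyadicCubeOf n m x, u y ∂volume := by
  have h_inv : (volume (dyadicCubeOf n l x))⁻¹ ≠ ∞ :=
    ENNReal.inv_ne_top.2 (volume_dyadicCubeOf_ne_zero n l x)
  have h_vol (z) : volume (dyadicCubeOf n l z) = volume (dyadicCubeOf n l x) := by
    rw [volume_dyadicCubeOf, volume_dyadicCubeOf]
  simp only [setLAverage_eq, h_vol, div_eq_mul_inv]
  rw [lintegral_mul_const' _ _ h_inv, lintegral_setLIntegral_dyadicCubeOf hlm hu,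
    ENNReal.mul_inv_cancel_right (volume_dyadicCubeOf_ne_zero n l x)
      (volume_dyadicCubeOf_ne_top n l x)]

lemma enorm_dyadicAvg_sub_le (hb : LocallyIntegrable b) (m : ℤ) (x : EuclideanSpace ℝ (Fin n))
    (c : ℝ) : ‖dyadicAvg n m b x - c‖ₑ ≤ ⨍⁻ y in dyadicCubeOf n m x, ‖b y - c‖ₑ ∂volume := by
  refine enorm_setAverage_sub_le ?_ (volume_dyadicCubeOf_ne_zero n m x)
    (volume_dyadicCubeOf_ne_top n m x) c
  rw [dyadicCubeOf_eq_cube]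
  exact integrableOn_cube hb _ _

end DyadicAverages

section MeanOscillation

variable {n : ℕ} {l m : ℤ} {b : EuclideanSpace ℝ (Fin n) → ℝ} {M : ℝ≥0}

lemma ennreal_add_sq_le (s t : ℝ≥0∞) : (s + t) ^ 2 ≤ 2 * s ^ 2 + 2 * t ^ 2 := by
  have h := ENNReal.rpow_add_le_mul_rpow_add_rpow s t (p := 2) (by norm_num)
  norm_num at h
  rwa [mul_add] at h

lemma enorm_sub_sq_le (s t c : ℝ) :
    ‖s - c‖ₑ ^ 2 ≤ 2 * ‖s - t‖ₑ ^ 2 + 2 * ‖t - c‖ₑ ^ 2 :=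
  calc ‖s - c‖ₑ ^ 2 ≤ (‖s - t‖ₑ + ‖t - c‖ₑ) ^ 2 := by
        gcongr
        exact (congr_arg _ (sub_add_sub_cancel s t c).symm).trans_le (enorm_add_le _ _)
    _ ≤ _ := ennreal_add_sq_le _ _

/-- `b` is a function of bounded mean oscillation with `‖b‖_{BMO} ≤ M`. The oscillations are lower
integrals, so that the bound cannot hold through the junk value of a divergent Bochner integral. -/
structure HasBMOBound (b : EuclideanSpace ℝ (Fin n) → ℝ) (M : ℝ≥0) : Prop where
  locallyIntegrable : LocallyIntegrable b
  oscillation_le : ∀ (a : EuclideanSpace ℝ (Fin n)) (ℓ : ℝ), 0 < ℓ →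
    ⨍⁻ y in cube n a ℓ, ‖b y - ⨍ z in cube n a ℓ, b z‖ₑ ∂volume ≤ M

namespace HasBMOBound

lemma dyadic_oscillation_le (hb : HasBMOBound b M) (m : ℤ) (x : EuclideanSpace ℝ (Fin n)) :
    ⨍⁻ y in dyadicCubeOf n m x, ‖b y - dyadicAvg n m b x‖ₑ ∂volume ≤ M := by
  rw [dyadicAvg, dyadicCubeOf_eq_cube]
  exact hb.oscillation_le _ _ (by positivity)

lemma enorm_dyadicAvg_sub_succ_le (hb : HasBMOBound b M) (m : ℤ) (x : EuclideanSpace ℝ (Fin n)) :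
    ‖dyadicAvg n m b x - dyadicAvg n (m + 1) b x‖ₑ ≤ 2 ^ n * M :=
  calc ‖dyadicAvg n m b x - dyadicAvg n (m + 1) b x‖ₑ
      ≤ ⨍⁻ y in dyadicCubeOf n m x, ‖b y - dyadicAvg n (m + 1) b x‖ₑ ∂volume :=
        enorm_dyadicAvg_sub_le hb.locallyIntegrable m x _
    _ ≤ 2 ^ n * ⨍⁻ y in dyadicCubeOf n (m + 1) x, ‖b y - dyadicAvg n (m + 1) b x‖ₑ ∂volume :=
        setLAverage_le_mul_of_subset (dyadicCubeOf_mono (by lia) x)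
          (volume_dyadicCubeOf_ne_zero n _ x) (volume_dyadicCubeOf_ne_top n _ x)
          (volume_dyadicCubeOf_succ n m x).le _
    _ ≤ 2 ^ n * M := by
        gcongr
        exact hb.dyadic_oscillation_le _ x

/-- The stopping inequality of the John–Nirenberg argument: on a dyadic cube of side `2 ^ m` over
which the average of `b` is within `4 * M` of `c`, the second moment of `E_l b - c` is controlled by
the first moment of `b - c`. -/
def StoppedSqBound (b : EuclideanSpace ℝ (Fin n) → ℝ) (M : ℝ≥0) (l m : ℤ) : Prop :=
  ∀ (c : ℝ) (x : EuclideanSpace ℝ (Fin n)), ‖dyadicAvg n m b x - c‖ₑ ≤ 4 * M →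
    ⨍⁻ z in dyadicCubeOf n m x, ‖dyadicAvg n l b z - c‖ₑ ^ 2 ∂volume ≤
      16 * M ^ 2 + (16 + (2 ^ n + 4) ^ 2) * M *
        ⨍⁻ y in dyadicCubeOf n m x, ‖b y - c‖ₑ ∂volume

lemma stoppedSqBound_self (b : EuclideanSpace ℝ (Fin n) → ℝ) (M : ℝ≥0) (l : ℤ) :
    StoppedSqBound b M l l := fun c x hx =>
  calc ⨍⁻ z in dyadicCubeOf n l x, ‖dyadicAvg n l b z - c‖ₑ ^ 2 ∂volume
      ≤ (4 * M) ^ 2 :=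
        setLAverage_le_of_forall_mem_le (measurableSet_dyadicCubeOf n l x) fun z hz => by
          rw [dyadicAvg_eq_of_mem b hz]
          gcongr
    _ = 16 * M ^ 2 := by ring
    _ ≤ _ := le_self_add

lemma dyadic_sq_oscillation_le_of_stopped (hb : HasBMOBound b M) (h : StoppedSqBound b M l m)
    (x : EuclideanSpace ℝ (Fin n)) :
    ⨍⁻ z in dyadicCubeOf n m x, ‖dyadicAvg n l b z - dyadicAvg n m b x‖ₑ ^ 2 ∂volume ≤
      (32 + (2 ^ n + 4) ^ 2) * M ^ 2 :=
  calc ⨍⁻ z in dyadicCubeOf n m x, ‖dyadicAvg n l b z - dyadicAvg n m b x‖ₑ ^ 2 ∂volume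
      ≤ 16 * M ^ 2 + (16 + (2 ^ n + 4) ^ 2) * M *
        ⨍⁻ y in dyadicCubeOf n m x, ‖b y - dyadicAvg n m b x‖ₑ ∂volume := h _ x (by simp)
    _ ≤ 16 * M ^ 2 + (16 + (2 ^ n + 4) ^ 2) * M * M := by
        gcongr
        exact hb.dyadic_oscillation_le m x
    _ = (32 + (2 ^ n + 4) ^ 2) * M ^ 2 := by ring

-- Absorption: the average has jumped past `4 * M`, so one factor `4 * M` of the squared bound is at
-- most the first moment of `b - c`.
lemma setLAverage_sq_le_of_lt_of_le (hb : HasBMOBound b M) (h : StoppedSqBound b M l m) {c : ℝ}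
    {x : EuclideanSpace ℝ (Fin n)} (h_lt : 4 * M < ‖dyadicAvg n m b x - c‖ₑ)
    (h_le : ‖dyadicAvg n m b x - c‖ₑ ≤ 2 ^ n * M + 4 * M) :
    ⨍⁻ z in dyadicCubeOf n m x, ‖dyadicAvg n l b z - c‖ₑ ^ 2 ∂volume ≤
      (16 + (2 ^ n + 4) ^ 2) * M * ⨍⁻ y in dyadicCubeOf n m x, ‖b y - c‖ₑ ∂volume :=
  calc ⨍⁻ z in dyadicCubeOf n m x, ‖dyadicAvg n l b z - c‖ₑ ^ 2 ∂volume
      ≤ ⨍⁻ z in dyadicCubeOf n m x, (2 * ‖dyadicAvg n m b x - c‖ₑ ^ 2 +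
          2 * ‖dyadicAvg n l b z - dyadicAvg n m b x‖ₑ ^ 2) ∂volume :=
        setLAverage_mono_of_forall_mem (measurableSet_dyadicCubeOf n m x) fun z _ =>
          (enorm_sub_sq_le _ (dyadicAvg n m b x) c).trans_eq (add_comm _ _)
    _ = 2 * ‖dyadicAvg n m b x - c‖ₑ ^ 2 + 2 * ⨍⁻ z in dyadicCubeOf n m x,
          ‖dyadicAvg n l b z - dyadicAvg n m b x‖ₑ ^ 2 ∂volume := by
        rw [setLAverage_const_add (volume_dyadicCubeOf_ne_zero n m x)
          (volume_dyadicCubeOf_ne_top n m x), setLAverage_const_mul ofNat_ne_top]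
    _ ≤ 2 * (2 ^ n * M + 4 * M) ^ 2 + 2 * ((32 + (2 ^ n + 4) ^ 2) * M ^ 2) := by
        gcongr
        exact hb.dyadic_sq_oscillation_le_of_stopped h x
    _ = (16 + (2 ^ n + 4) ^ 2) * M * (4 * M) := by ring
    _ ≤ (16 + (2 ^ n + 4) ^ 2) * M * ‖dyadicAvg n m b x - c‖ₑ := by gcongr
    _ ≤ _ := by
        gcongr
        exact enorm_dyadicAvg_sub_le hb.locallyIntegrable m x c

lemma stoppedSqBound_succ (hb : HasBMOBound b M) (h : StoppedSqBound b M l m) :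
    StoppedSqBound b M l (m + 1) := by
  intro c x hx
  have h_child (z) (hz : z ∈ dyadicCubeOf n (m + 1) x) :
      ⨍⁻ y in dyadicCubeOf n m z, ‖dyadicAvg n l b y - c‖ₑ ^ 2 ∂volume ≤
        16 * M ^ 2 + (16 + (2 ^ n + 4) ^ 2) * M *
          ⨍⁻ y in dyadicCubeOf n m z, ‖b y - c‖ₑ ∂volume := by
    rcases le_or_gt ‖dyadicAvg n m b z - c‖ₑ (4 * M) with hz_le | hz_gt
    · exact h c z hz_le
    · refine (hb.setLAverage_sq_le_of_lt_of_le h hz_gt ?_).trans le_add_self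
      calc ‖dyadicAvg n m b z - c‖ₑ
          ≤ ‖dyadicAvg n m b z - dyadicAvg n (m + 1) b z‖ₑ +
            ‖dyadicAvg n (m + 1) b z - c‖ₑ := by
            rw [← sub_add_sub_cancel _ (dyadicAvg n (m + 1) b z) c]
            exact enorm_add_le _ _
        _ ≤ 2 ^ n * M + 4 * M :=
            add_le_add (hb.enorm_dyadicAvg_sub_succ_le m z) (dyadicAvg_eq_of_mem b hz ▸ hx)
  have h_meas_l : AEMeasurable fun z => ‖dyadicAvg n l b z - c‖ₑ ^ 2 :=
    (((measurable_dyadicAvg n l b).sub_const c).enorm.pow_const 2).aemeasurable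
  have h_meas_b : AEMeasurable fun z => ‖b z - c‖ₑ :=
    (hb.locallyIntegrable.aestronglyMeasurable.aemeasurable.sub_const c).enorm
  rw [← setLAverage_setLAverage_dyadicCubeOf (l := m) (by lia) h_meas_l,
    ← setLAverage_setLAverage_dyadicCubeOf (l := m) (by lia) h_meas_b,
    ← setLAverage_const_mul (by finiteness), ← setLAverage_const_add
      (volume_dyadicCubeOf_ne_zero n _ x) (volume_dyadicCubeOf_ne_top n _ x)]
  exact setLAverage_mono_of_forall_mem (measurableSet_dyadicCubeOf n _ x) h_child

lemma dyadicAvg_sq_oscillation_le (hb : HasBMOBound b M) (hlm : l ≤ m)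
    (x : EuclideanSpace ℝ (Fin n)) :
    ⨍⁻ z in dyadicCubeOf n m x, ‖dyadicAvg n l b z - dyadicAvg n m b x‖ₑ ^ 2 ∂volume ≤
      (32 + (2 ^ n + 4) ^ 2) * M ^ 2 := by
  have h_stopped : StoppedSqBound b M l m := by
    induction m, hlm using Int.leInduction with
    | base => exact stoppedSqBound_self b M l
    | succ m _ ih => exact hb.stoppedSqBound_succ ih
  exact hb.dyadic_sq_oscillation_le_of_stopped h_stopped x

end HasBMOBound

end MeanOscillation

section ChangeOfVariables

variable {α β : Type*} [MeasurableSpace α] [MeasurableSpace β] {μ : Measure α} {ν : Measure β}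
  {T : α → β} {c : ℝ≥0∞}

lemma setLAverage_comp_of_map_eq_smul (hT : MeasurableEmbedding T) (h_map : μ.map T = c • ν)
    (hc₀ : c ≠ 0) (hc : c ≠ ∞) (s : Set β) (u : β → ℝ≥0∞) :
    ⨍⁻ x in T ⁻¹' s, u (T x) ∂μ = ⨍⁻ y in s, u y ∂ν := by
  rw [setLAverage_eq, setLAverage_eq, ← hT.lintegral_map, ← hT.restrict_map, ← hT.map_apply, h_map,
    Measure.restrict_smul, lintegral_smul_measure, Measure.smul_apply, smul_eq_mul, smul_eq_mul,
    ENNReal.mul_div_mul_left _ _ hc₀ hc]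

lemma setAverage_comp_of_map_eq_smul (hT : MeasurableEmbedding T) (h_map : μ.map T = c • ν)
    (hc₀ : c ≠ 0) (hc : c ≠ ∞) (s : Set β) (f : β → ℝ) :
    ⨍ x in T ⁻¹' s, f (T x) ∂μ = ⨍ y in s, f y ∂ν := by
  rw [setAverage_eq, setAverage_eq, ← hT.integral_map, ← hT.restrict_map, measureReal_def,
    ← hT.map_apply, h_map, Measure.restrict_smul, integral_smul_measure, Measure.smul_apply,
    smul_eq_mul (a := c), ENNReal.toReal_mul, mul_inv, smul_smul, mul_right_comm,
    inv_mul_cancel₀ (ENNReal.toReal_ne_zero.2 ⟨hc₀, hc⟩), one_mul, measureReal_def]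

end ChangeOfVariables

section JohnNirenberg

variable {n : ℕ} {b : EuclideanSpace ℝ (Fin n) → ℝ} {M : ℝ≥0}

lemma ae_tendsto_dyadicAvg (hb : LocallyIntegrable b) :
    ∀ᵐ x, Filter.Tendsto (fun j : ℕ => dyadicAvg n (-j) b x) Filter.atTop (nhds (b x)) := by
  filter_upwards [(Besicovitch.vitaliFamily volume).ae_tendsto_lintegral_enorm_sub_div hb] with x hx
  set r : ℕ → ℝ := fun j => (n + 1) * 2 ^ (-j : ℤ)
  set C : ℝ≥0∞ := ENNReal.ofReal (n + 1) ^ n *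
    volume (Metric.ball (0 : EuclideanSpace ℝ (Fin n)) 1)
  have hr_pos (j) : 0 < r j := by positivity
  have hr : Filter.Tendsto r Filter.atTop (nhdsWithin 0 (Set.Ioi 0)) := by
    refine tendsto_nhdsWithin_iff.2 ⟨?_, .of_forall hr_pos⟩
    simpa [r] using (tendsto_inv_atTop_zero.comp
      (tendsto_pow_atTop_atTop_of_one_lt (one_lt_two (α := ℝ)))).const_mul ((n : ℝ) + 1)
  have h_sub (j : ℕ) : dyadicCubeOf n (-j) x ⊆ Metric.closedBall x (r j) := fun y hy => by
    rw [mem_closedBall_iff_norm]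
    exact (norm_sub_le_of_mem_dyadicCubeOf hy).trans <|
      mul_le_mul_of_nonneg_right (by linarith) (by positivity)
  have h_vol (j : ℕ) :
      volume (Metric.closedBall x (r j)) ≤ C * volume (dyadicCubeOf n (-j) x) := by
    rw [Measure.addHaar_closedBall _ _ (hr_pos j).le, volume_dyadicCubeOf, finrank_euclideanSpace,
      Fintype.card_fin, mul_pow, ENNReal.ofReal_mul (by positivity),
      ENNReal.ofReal_pow (by positivity), ENNReal.ofReal_pow (by positivity), mul_right_comm]
  rw [tendsto_iff_edist_tendsto_0]
  refine tendsto_of_tendsto_of_tendsto_of_le_of_le tendsto_const_nhds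
    ((mul_zero C).subst (motive := fun t => Filter.Tendsto _ _ (nhds t)) <|
      ENNReal.Tendsto.const_mul (hx.comp ((Besicovitch.tendsto_filterAt volume x).comp hr))
        (.inr (by finiteness)))
    (fun _ => zero_le) fun j => ?_
  rw [edist_eq_enorm_sub]
  exact (enorm_dyadicAvg_sub_le hb _ x _).trans <|
    (setLAverage_le_mul_of_subset (h_sub j) (Metric.measure_closedBall_pos _ _ (hr_pos j)).ne'
      measure_closedBall_lt_top.ne (h_vol j) _).trans_eq (by rw [setLAverage_eq]; rfl)

namespace HasBMOBound

lemma dyadic_sq_oscillation_le (hb : HasBMOBound b M) (m : ℤ) (x : EuclideanSpace ℝ (Fin n)) :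
    ⨍⁻ y in dyadicCubeOf n m x, ‖b y - dyadicAvg n m b x‖ₑ ^ 2 ∂volume ≤
      (32 + (2 ^ n + 4) ^ 2) * M ^ 2 := by
  set c := dyadicAvg n m b x
  set μ := (volume.restrict (dyadicCubeOf n m x) Set.univ)⁻¹ • volume.restrict (dyadicCubeOf n m x)
  have h_lim : ∀ᵐ y ∂μ, ‖b y - c‖ₑ ^ 2 =
      Filter.liminf (fun j : ℕ => ‖dyadicAvg n (-j) b y - c‖ₑ ^ 2) Filter.atTop := by
    filter_upwards [Measure.ae_smul_measure
      (ae_restrict_of_ae (ae_tendsto_dyadicAvg hb.locallyIntegrable)) _] with y hy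
    exact (((ENNReal.continuous_pow 2).tendsto _).comp (hy.sub_const c).enorm).liminf_eq.symm
  calc ∫⁻ y, ‖b y - c‖ₑ ^ 2 ∂μ
      = ∫⁻ y, Filter.liminf (fun j : ℕ => ‖dyadicAvg n (-j) b y - c‖ₑ ^ 2) Filter.atTop ∂μ :=
        lintegral_congr_ae h_lim
    _ ≤ Filter.liminf (fun j : ℕ => ∫⁻ y, ‖dyadicAvg n (-j) b y - c‖ₑ ^ 2 ∂μ) Filter.atTop :=
        lintegral_liminf_le fun j =>
          ((measurable_dyadicAvg n _ b).sub_const c).enorm.pow_const 2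
    _ ≤ (32 + (2 ^ n + 4) ^ 2) * M ^ 2 := by
        refine Filter.liminf_le_of_frequently_le' (Filter.Eventually.frequently ?_)
        filter_upwards [Filter.eventually_ge_atTop (-m).toNat] with j hj
        exact hb.dyadicAvg_sq_oscillation_le (by lia) x

end HasBMOBound

section Affine

variable (a : EuclideanSpace ℝ (Fin n)) {ℓ : ℝ}

lemma map_add_smul_volume (hℓ : 0 < ℓ) :
    Measure.map (fun y : EuclideanSpace ℝ (Fin n) => a + ℓ • y) volume =
      ENNReal.ofReal |(ℓ ^ n)⁻¹| • volume := by
  calc Measure.map (fun y : EuclideanSpace ℝ (Fin n) => a + ℓ • y) volume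
      = Measure.map (a + ·) (Measure.map (ℓ • ·) volume) :=
        (Measure.map_map (measurable_const_add a) (measurable_const_smul ℓ)).symm
    _ = ENNReal.ofReal |(ℓ ^ n)⁻¹| • volume := by
        rw [Measure.map_addHaar_smul _ hℓ.ne', Measure.map_smul, map_add_left_eq_self,
          finrank_euclideanSpace, Fintype.card_fin]

lemma cube_eq_preimage_add_smul (hℓ : 0 < ℓ) (a' : EuclideanSpace ℝ (Fin n)) (ℓ' : ℝ) :
    cube n a' ℓ' = (fun y => a + ℓ • y) ⁻¹' cube n (a + ℓ • a') (ℓ * ℓ') := by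
  ext y
  simp only [cube, Set.mem_preimage, Set.mem_ofPred_eq, PiLp.add_apply, PiLp.smul_apply,
    smul_eq_mul, add_assoc, add_lt_add_iff_left, add_le_add_iff_left, ← mul_add,
    mul_lt_mul_iff_right₀ hℓ, mul_le_mul_iff_right₀ hℓ]

lemma measurableEmbedding_add_smul (hℓ : 0 < ℓ) :
    MeasurableEmbedding fun y : EuclideanSpace ℝ (Fin n) => a + ℓ • y :=
  (measurableEmbedding_addLeft a).comp (measurableEmbedding_const_smul₀ hℓ.ne')

lemma setLAverage_cube_comp_add_smul (hℓ : 0 < ℓ) (a' : EuclideanSpace ℝ (Fin n)) (ℓ' : ℝ)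
    (u : EuclideanSpace ℝ (Fin n) → ℝ≥0∞) :
    ⨍⁻ y in cube n a' ℓ', u (a + ℓ • y) ∂volume =
      ⨍⁻ y in cube n (a + ℓ • a') (ℓ * ℓ'), u y ∂volume := by
  rw [cube_eq_preimage_add_smul a hℓ]
  exact setLAverage_comp_of_map_eq_smul (measurableEmbedding_add_smul a hℓ)
    (map_add_smul_volume a hℓ) (ENNReal.ofReal_pos.2 (by positivity)).ne' ENNReal.ofReal_ne_top _ u

lemma setAverage_cube_comp_add_smul (hℓ : 0 < ℓ) (a' : EuclideanSpace ℝ (Fin n)) (ℓ' : ℝ)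
    (f : EuclideanSpace ℝ (Fin n) → ℝ) :
    ⨍ y in cube n a' ℓ', f (a + ℓ • y) = ⨍ y in cube n (a + ℓ • a') (ℓ * ℓ'), f y := by
  rw [cube_eq_preimage_add_smul a hℓ]
  exact setAverage_comp_of_map_eq_smul (measurableEmbedding_add_smul a hℓ)
    (map_add_smul_volume a hℓ) (ENNReal.ofReal_pos.2 (by positivity)).ne' ENNReal.ofReal_ne_top _ f

lemma locallyIntegrable_comp_add_smul (hb : LocallyIntegrable b) (hℓ : 0 < ℓ) :
    LocallyIntegrable fun y => b (a + ℓ • y) := by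
  refine (locallyIntegrable_map_homeomorph
    ((Homeomorph.smulOfNeZero ℓ hℓ.ne').trans (Homeomorph.addLeft a))).1 ?_
  have h_map := map_add_smul_volume a hℓ
  intro y
  obtain ⟨s, hs, hbs⟩ := hb y
  refine ⟨s, hs, ?_⟩
  change IntegrableOn b s (Measure.map (fun y => a + ℓ • y) volume)
  rw [IntegrableOn, h_map, Measure.restrict_smul]
  exact hbs.smul_measure ENNReal.ofReal_ne_top

end Affine

namespace HasBMOBound

lemma comp_add_smul (hb : HasBMOBound b M) (a : EuclideanSpace ℝ (Fin n)) {ℓ : ℝ} (hℓ : 0 < ℓ) :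
    HasBMOBound (fun y => b (a + ℓ • y)) M where
  locallyIntegrable := locallyIntegrable_comp_add_smul a hb.locallyIntegrable hℓ
  oscillation_le a' ℓ' hℓ' := by
    rw [setAverage_cube_comp_add_smul a hℓ, setLAverage_cube_comp_add_smul a hℓ a' ℓ'
      fun y => ‖b y - ⨍ z in cube n (a + ℓ • a') (ℓ * ℓ'), b z‖ₑ]
    exact hb.oscillation_le _ _ (by positivity)

lemma sq_oscillation_le (hb : HasBMOBound b M) (a : EuclideanSpace ℝ (Fin n)) {ℓ : ℝ}
    (hℓ : 0 < ℓ) :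
    ⨍⁻ y in cube n a ℓ, ‖b y - ⨍ z in cube n a ℓ, b z‖ₑ ^ 2 ∂volume ≤
      (32 + (2 ^ n + 4) ^ 2) * M ^ 2 := by
  have h_unit := (hb.comp_add_smul a hℓ).dyadic_sq_oscillation_le 0 (WithLp.toLp 2 1)
  have h_cube : dyadicCubeOf n 0 (WithLp.toLp 2 1) = cube n 0 1 := by
    rw [dyadicCubeOf_eq_cube]
    simp [cube]
  rw [dyadicAvg, h_cube, setAverage_cube_comp_add_smul a hℓ, setLAverage_cube_comp_add_smul a hℓ 0 1
    fun y => ‖b y - ⨍ z in cube n (a + ℓ • 0) (ℓ * 1), b z‖ₑ ^ 2] at h_unit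
  simpa only [smul_zero, add_zero, mul_one] using h_unit

end HasBMOBound

end JohnNirenberg

section AlmostOrthogonality

open scoped InnerProductSpace InnerProduct

variable {ι 𝕜 H G : Type*} [RCLike 𝕜]
  [NormedAddCommGroup H] [InnerProductSpace 𝕜 H] [CompleteSpace H]
  [NormedAddCommGroup G] [InnerProductSpace 𝕜 G] [CompleteSpace G]

lemma norm_sum_adjoint_apply_sq_le {T : ι → H →L[𝕜] G} {a : ι → ι → ℝ} {A : ℝ} (s : Finset ι)
    (ha_symm : ∀ j k, a j k = a k j) (ha_sum : ∀ j, ∑ k ∈ s, a j k ≤ A)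
    (hT : ∀ j k, ‖T j ∘L (T k)†‖ ≤ a j k) (g : ι → G) :
    ‖∑ k ∈ s, ((T k)†) (g k)‖ ^ 2 ≤ A * ∑ k ∈ s, ‖g k‖ ^ 2 := by
  have ha_nonneg (j k) : 0 ≤ a j k := (norm_nonneg _).trans (hT j k)
  have h_inner (j k) : ‖⟪((T j)†) (g j), ((T k)†) (g k)⟫_𝕜‖ ≤
      a j k * ((‖g j‖ ^ 2 + ‖g k‖ ^ 2) / 2) := by
    rw [ContinuousLinearMap.adjoint_inner_left]
    calc ‖⟪g j, T j (((T k)†) (g k))⟫_𝕜‖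
        ≤ ‖g j‖ * ‖(T j ∘L (T k)†) (g k)‖ := norm_inner_le_norm _ _
      _ ≤ ‖g j‖ * (a j k * ‖g k‖) := by
        gcongr
        exact ContinuousLinearMap.le_of_opNorm_le _ (hT j k) _
      _ ≤ a j k * ((‖g j‖ ^ 2 + ‖g k‖ ^ 2) / 2) := by
        nlinarith [mul_nonneg (ha_nonneg j k) (sq_nonneg (‖g j‖ - ‖g k‖))]
  calc ‖∑ k ∈ s, ((T k)†) (g k)‖ ^ 2
      = ‖⟪∑ j ∈ s, ((T j)†) (g j), ∑ k ∈ s, ((T k)†) (g k)⟫_𝕜‖ := by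
        rw [inner_self_eq_norm_sq_to_K]; simp
    _ ≤ ∑ j ∈ s, ∑ k ∈ s, a j k * ((‖g j‖ ^ 2 + ‖g k‖ ^ 2) / 2) := by
        simp_rw [sum_inner, inner_sum]
        exact (norm_sum_le _ _).trans <| Finset.sum_le_sum fun j _ =>
          (norm_sum_le _ _).trans <| Finset.sum_le_sum fun k _ => h_inner j k
    _ = (∑ j ∈ s, (∑ k ∈ s, a j k) * ‖g j‖ ^ 2) / 2 +
          (∑ k ∈ s, (∑ j ∈ s, a k j) * ‖g k‖ ^ 2) / 2 := by
        simp only [add_div, mul_add, Finset.sum_add_distrib, Finset.sum_mul, Finset.sum_div,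
          mul_div_assoc]
        congr 1
        rw [Finset.sum_comm]
        simp only [ha_symm]
    _ ≤ (∑ j ∈ s, A * ‖g j‖ ^ 2) / 2 + (∑ k ∈ s, A * ‖g k‖ ^ 2) / 2 := by
        gcongr <;> exact ha_sum _
    _ = A * ∑ k ∈ s, ‖g k‖ ^ 2 := by rw [← Finset.mul_sum]; ring

lemma sum_norm_apply_sq_le_of_almost_orthogonal {T : ι → H →L[𝕜] G} {a : ι → ι → ℝ} {A : ℝ}
    (s : Finset ι) (hA : 0 ≤ A) (ha_symm : ∀ j k, a j k = a k j) (ha_sum : ∀ j, ∑ k ∈ s, a j k ≤ A)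
    (hT : ∀ j k, ‖T j ∘L (T k)†‖ ≤ a j k) (f : H) :
    ∑ k ∈ s, ‖T k f‖ ^ 2 ≤ A * ‖f‖ ^ 2 := by
  set S := ∑ k ∈ s, ‖T k f‖ ^ 2
  set v := ∑ k ∈ s, ((T k)†) (T k f)
  have hS_nonneg : 0 ≤ S := by positivity
  have hS_eq : (S : 𝕜) = ⟪f, v⟫_𝕜 := by
    simp only [v, S, inner_sum, ContinuousLinearMap.adjoint_inner_right, inner_self_eq_norm_sq_to_K]
    push_cast
    rfl
  have hS_le : S ≤ ‖f‖ * ‖v‖ := by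
    rw [← abs_of_nonneg hS_nonneg, ← RCLike.norm_ofReal (K := 𝕜), hS_eq]
    exact norm_inner_le_norm f v
  have hv : ‖v‖ ^ 2 ≤ A * S := norm_sum_adjoint_apply_sq_le s ha_symm ha_sum hT _
  rcases hS_nonneg.eq_or_lt with hS | hS
  · rw [← hS]
    positivity
  · refine le_of_mul_le_mul_right ?_ hS
    calc S * S ≤ (‖f‖ * ‖v‖) * (‖f‖ * ‖v‖) := by gcongr
      _ = ‖f‖ ^ 2 * ‖v‖ ^ 2 := by ring
      _ ≤ ‖f‖ ^ 2 * (A * S) := by gcongr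
      _ = A * ‖f‖ ^ 2 * S := by ring

lemma summable_pow_natAbs {r : ℝ} (hr₀ : 0 ≤ r) (hr₁ : r < 1) :
    Summable fun d : ℤ => r ^ d.natAbs :=
  .of_nat_of_neg (by simpa using summable_geometric_of_lt_one hr₀ hr₁)
    (by simpa using summable_geometric_of_lt_one hr₀ hr₁)

end AlmostOrthogonality

section Schur

variable {α β : Type*} [MeasurableSpace α] [MeasurableSpace β] {μ : Measure α} {ν : Measure β}

lemma sq_lintegral_mul_le {f u : α → ℝ≥0∞} (hf : AEMeasurable f μ) (hu : AEMeasurable u μ) :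
    (∫⁻ a, f a * u a ∂μ) ^ 2 ≤ (∫⁻ a, f a ∂μ) * ∫⁻ a, f a * u a ^ 2 ∂μ := by
  have rpow_half_sq (c : ℝ≥0∞) : (c ^ (1 / 2 : ℝ)) ^ 2 = c := by
    rw [← ENNReal.rpow_natCast, ← ENNReal.rpow_mul]; norm_num
  have h := ENNReal.lintegral_mul_le_Lp_mul_Lq μ Real.HolderConjugate.two_two
    (f := fun a => f a ^ (1 / 2 : ℝ)) (g := fun a => f a ^ (1 / 2 : ℝ) * u a) (by fun_prop)
    (by fun_prop)
  simp only [Pi.mul_apply, ← mul_assoc, ENNReal.rpow_two, ← sq, mul_pow, rpow_half_sq] at h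
  calc _ ≤ _ := pow_le_pow_left' h 2
    _ = _ := by rw [mul_pow, rpow_half_sq, rpow_half_sq]

lemma lintegral_sq_lintegral_mul_le [SFinite μ] [SFinite ν] {K : α → β → ℝ≥0∞} {A B : ℝ≥0∞}
    (hK : Measurable (Function.uncurry K)) (hrow : ∀ x, ∫⁻ y, K x y ∂ν ≤ A)
    (hcol : ∀ y, ∫⁻ x, K x y ∂μ ≤ B) {u : β → ℝ≥0∞} (hu : AEMeasurable u ν) :
    ∫⁻ x, (∫⁻ y, K x y * u y ∂ν) ^ 2 ∂μ ≤ A * B * ∫⁻ y, u y ^ 2 ∂ν := by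
  calc ∫⁻ x, (∫⁻ y, K x y * u y ∂ν) ^ 2 ∂μ
      ≤ ∫⁻ x, A * ∫⁻ y, K x y * u y ^ 2 ∂ν ∂μ := by
        refine lintegral_mono fun x => (sq_lintegral_mul_le ?_ hu).trans (by gcongr; exact hrow x)
        exact hK.of_uncurry_left.aemeasurable
    _ = A * ∫⁻ x, ∫⁻ y, K x y * u y ^ 2 ∂ν ∂μ := by
        apply lintegral_const_mul''
        apply AEMeasurable.lintegral_prod_right' (f := fun p : α × β => K p.1 p.2 * u p.2 ^ 2)
        exact hK.aemeasurable.mul (hu.comp_snd.pow_const 2)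
    _ = A * ∫⁻ y, ∫⁻ x, K x y * u y ^ 2 ∂μ ∂ν := by
        rw [lintegral_lintegral_swap]
        exact hK.aemeasurable.mul (hu.comp_snd.pow_const 2)
    _ = A * ∫⁻ y, (∫⁻ x, K x y ∂μ) * u y ^ 2 ∂ν := by
        congr 1
        exact lintegral_congr fun y => lintegral_mul_const _ hK.of_uncurry_right
    _ ≤ A * ∫⁻ y, B * u y ^ 2 ∂ν := by gcongr with y; exact hcol y
    _ = A * B * ∫⁻ y, u y ^ 2 ∂ν := by
        rw [lintegral_const_mul'' _ (hu.pow_const 2), mul_assoc]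

lemma eLpNorm_two_sq (f : α → ℝ) : eLpNorm f 2 μ ^ 2 = ∫⁻ a, ‖f a‖ₑ ^ 2 ∂μ := by
  simpa using eLpNorm_nnreal_pow_eq_lintegral (f := f) (μ := μ) (p := 2) two_ne_zero

lemma memLp_two_of_lintegral_sq_le {f : α → ℝ} {g : β → ℝ} {C : ℝ≥0}
    (hf : AEStronglyMeasurable f μ) (hg : MemLp g 2 ν)
    (h : ∫⁻ x, ‖f x‖ₑ ^ 2 ∂μ ≤ C * ∫⁻ y, ‖g y‖ₑ ^ 2 ∂ν) : MemLp f 2 μ := by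
  rw [← eLpNorm_two_sq, ← eLpNorm_two_sq] at h
  have h_lt : eLpNorm f 2 μ ^ 2 < ∞ :=
    h.trans_lt (ENNReal.mul_lt_top coe_lt_top (ENNReal.pow_lt_top hg.eLpNorm_lt_top))
  exact ⟨hf, (ENNReal.pow_lt_top_iff.1 h_lt).resolve_right two_ne_zero⟩

lemma enorm_sq_eq_lintegral (f : Lp ℝ 2 μ) : ‖f‖ₑ ^ 2 = ∫⁻ x, ‖f x‖ₑ ^ 2 ∂μ := by
  rw [Lp.enorm_def, eLpNorm_two_sq]

lemma norm_le_sqrt_mul_norm_of_lintegral_sq_le {f : Lp ℝ 2 μ} {g : Lp ℝ 2 ν} {C : ℝ≥0}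
    (h : ∫⁻ x, ‖f x‖ₑ ^ 2 ∂μ ≤ C * ∫⁻ y, ‖g y‖ₑ ^ 2 ∂ν) : ‖f‖ ≤ √C * ‖g‖ := by
  rw [← enorm_sq_eq_lintegral, ← enorm_sq_eq_lintegral] at h
  simp only [enorm_eq_nnnorm] at h
  have h_sq : ‖f‖ ^ 2 ≤ C * ‖g‖ ^ 2 := by exact_mod_cast h
  calc ‖f‖ ≤ √(C * ‖g‖ ^ 2) := Real.le_sqrt_of_sq_le h_sq
    _ = √C * ‖g‖ := by rw [Real.sqrt_mul C.coe_nonneg, Real.sqrt_sq (norm_nonneg _)]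

/-- Hypotheses of the Schur test for the integral operator with kernel `q`: row integrals at most
`A` and column integrals at most `B`, in absolute value. -/
structure IsSchurKernel (μ : Measure α) (ν : Measure β) (q : α → β → ℝ) (A B : ℝ≥0) : Prop where
  measurable : Measurable (Function.uncurry q)
  row_le : ∀ x, ∫⁻ y, ‖q x y‖ₑ ∂ν ≤ A
  col_le : ∀ y, ∫⁻ x, ‖q x y‖ₑ ∂μ ≤ B

namespace IsSchurKernel

variable {q : α → β → ℝ} {A B : ℝ≥0}

lemma swap (hq : IsSchurKernel μ ν q A B) : IsSchurKernel ν μ (fun y x => q x y) B A :=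
  ⟨hq.measurable.comp measurable_swap, hq.col_le, hq.row_le⟩

variable [SFinite μ] [SFinite ν]

lemma lintegral_sq_le (hq : IsSchurKernel μ ν q A B) {f : β → ℝ} (hf : AEMeasurable f ν) :
    ∫⁻ x, (∫⁻ y, ‖q x y‖ₑ * ‖f y‖ₑ ∂ν) ^ 2 ∂μ ≤ A * B * ∫⁻ y, ‖f y‖ₑ ^ 2 ∂ν :=
  lintegral_sq_lintegral_mul_le hq.measurable.enorm hq.row_le hq.col_le hf.enorm

lemma ae_integrable (hq : IsSchurKernel μ ν q A B) {f : β → ℝ} (hf : MemLp f 2 ν) :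
    ∀ᵐ x ∂μ, Integrable (fun y => q x y * f y) ν := by
  have h_fin : ∫⁻ x, (∫⁻ y, ‖q x y‖ₑ * ‖f y‖ₑ ∂ν) ^ 2 ∂μ ≠ ∞ := by
    refine ne_top_of_le_ne_top ?_ (hq.lintegral_sq_le hf.aestronglyMeasurable.aemeasurable)
    rw [← eLpNorm_two_sq]
    exact ENNReal.mul_ne_top (by finiteness) (ENNReal.pow_ne_top hf.eLpNorm_ne_top)
  have h_meas : AEMeasurable (fun x => (∫⁻ y, ‖q x y‖ₑ * ‖f y‖ₑ ∂ν) ^ 2) μ := by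
    refine AEMeasurable.pow_const (AEMeasurable.lintegral_prod_right'
      (f := fun p : α × β => ‖q p.1 p.2‖ₑ * ‖f p.2‖ₑ) ?_) 2
    exact hq.measurable.enorm.aemeasurable.mul hf.aestronglyMeasurable.comp_snd.enorm
  filter_upwards [ae_lt_top' h_meas h_fin] with x hx
  refine ⟨hq.measurable.of_uncurry_left.aestronglyMeasurable.mul hf.aestronglyMeasurable, ?_⟩
  simp_rw [HasFiniteIntegral, enorm_mul]
  exact (ENNReal.pow_lt_top_iff.1 hx).resolve_right two_ne_zero

lemma lintegral_enorm_integral_sq_le (hq : IsSchurKernel μ ν q A B) {f : β → ℝ}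
    (hf : AEMeasurable f ν) :
    ∫⁻ x, ‖∫ y, q x y * f y ∂ν‖ₑ ^ 2 ∂μ ≤ (A * B : ℝ≥0) * ∫⁻ y, ‖f y‖ₑ ^ 2 ∂ν := by
  push_cast
  refine (lintegral_mono fun x => ?_).trans (hq.lintegral_sq_le hf)
  gcongr
  refine (enorm_integral_le_lintegral_enorm _).trans_eq ?_
  simp_rw [enorm_mul]

lemma memLp_integral (hq : IsSchurKernel μ ν q A B) {f : β → ℝ} (hf : MemLp f 2 ν) :
    MemLp (fun x => ∫ y, q x y * f y ∂ν) 2 μ := by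
  refine memLp_two_of_lintegral_sq_le ?_ hf (hq.lintegral_enorm_integral_sq_le
    hf.aestronglyMeasurable.aemeasurable)
  exact AEStronglyMeasurable.integral_prod_right' (f := fun p : α × β => q p.1 p.2 * f p.2)
    (hq.measurable.aestronglyMeasurable.mul hf.aestronglyMeasurable.comp_snd)

/-- The operator `f ↦ ∫ q(·, y) f(y) dν(y)` from `L²(ν)` to `L²(μ)` with Schur kernel `q`. -/
def toL2 (hq : IsSchurKernel μ ν q A B) : Lp ℝ 2 ν →L[ℝ] Lp ℝ 2 μ :=
  LinearMap.mkContinuous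
    { toFun := fun f => (hq.memLp_integral (Lp.memLp f)).toLp
      map_add' := fun f g => by
        rw [← MemLp.toLp_add]
        refine MemLp.toLp_congr _ _ ?_
        filter_upwards [hq.ae_integrable (Lp.memLp f), hq.ae_integrable (Lp.memLp g)] with x hf hg
        rw [Pi.add_apply, ← integral_add hf hg]
        refine integral_congr_ae ?_
        filter_upwards [Lp.coeFn_add f g] with y hy
        rw [hy, Pi.add_apply, mul_add]
      map_smul' := fun c f => by
        rw [← MemLp.toLp_const_smul]
        refine MemLp.toLp_congr _ _ (.of_forall fun x => ?_)
        rw [Pi.smul_apply, RingHom.id_apply, smul_eq_mul, ← integral_const_mul]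
        refine integral_congr_ae ?_
        filter_upwards [Lp.coeFn_smul c f] with y hy
        rw [hy, Pi.smul_apply, smul_eq_mul, mul_left_comm] }
    (√(A * B : ℝ≥0)) fun f => by
      refine norm_le_sqrt_mul_norm_of_lintegral_sq_le (le_of_eq_of_le (lintegral_congr_ae ?_)
        (hq.lintegral_enorm_integral_sq_le (Lp.aestronglyMeasurable f).aemeasurable))
      filter_upwards [MemLp.coeFn_toLp (hq.memLp_integral (Lp.memLp f))] with x hx
      exact congr_arg (‖·‖ₑ ^ 2) hx

lemma coeFn_toL2 (hq : IsSchurKernel μ ν q A B) (f : Lp ℝ 2 ν) :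
    hq.toL2 f =ᵐ[μ] fun x => ∫ y, q x y * f y ∂ν :=
  MemLp.coeFn_toLp (hq.memLp_integral (Lp.memLp f))

lemma coeFn_toL2_toLp (hq : IsSchurKernel μ ν q A B) {f : β → ℝ} (hf : MemLp f 2 ν) :
    hq.toL2 hf.toLp =ᵐ[μ] fun x => ∫ y, q x y * f y ∂ν := by
  filter_upwards [hq.coeFn_toL2 hf.toLp] with x hx
  rw [hx]
  refine integral_congr_ae ?_
  filter_upwards [hf.coeFn_toLp] with y hy
  rw [hy]

lemma integrable_mul_mul (hq : IsSchurKernel μ ν q A B) {g : α → ℝ} {f : β → ℝ}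
    (hg : MemLp g 2 μ) (hf : MemLp f 2 ν) :
    Integrable (fun p : α × β => g p.1 * (q p.1 p.2 * f p.2)) (μ.prod ν) := by
  have h_norm : IsSchurKernel μ ν (fun x y => ‖q x y‖) A B :=
    ⟨hq.measurable.norm, by simpa using hq.row_le, by simpa using hq.col_le⟩
  refine (integrable_prod_iff (hg.aestronglyMeasurable.comp_fst.mul
    (hq.measurable.aestronglyMeasurable.mul hf.aestronglyMeasurable.comp_snd))).2 ?_
  refine ⟨(hq.ae_integrable hf).mono fun x hx => hx.const_mul (g x), ?_⟩
  change Integrable (fun x => ∫ y, ‖g x * (q x y * f y)‖ ∂ν) μ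
  simp_rw [norm_mul, integral_const_mul]
  exact hg.norm.integrable_mul (h_norm.memLp_integral hf.norm)

open scoped InnerProduct in
lemma adjoint_toL2 (hq : IsSchurKernel μ ν q A B) : hq.toL2† = hq.swap.toL2 := by
  refine ((ContinuousLinearMap.eq_adjoint_iff _ _).2 fun g f => ?_).symm
  calc inner ℝ (hq.swap.toL2 g) f
      = ∫ y, ∫ x, g x * (q x y * f y) ∂μ ∂ν := by
        rw [L2.inner_def]
        refine integral_congr_ae ?_
        filter_upwards [hq.swap.coeFn_toL2 g] with y hy
        rw [hy, real_inner_eq_re_inner]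
        simp only [RCLike.inner_apply, conj_trivial, RCLike.re_to_real]
        rw [← integral_const_mul]
        exact integral_congr_ae (.of_forall fun x => by ring)
    _ = ∫ x, ∫ y, g x * (q x y * f y) ∂ν ∂μ :=
        (integral_integral_swap (hq.integrable_mul_mul (Lp.memLp g) (Lp.memLp f))).symm
    _ = inner ℝ g (hq.toL2 f) := by
        rw [L2.inner_def]
        refine integral_congr_ae ?_
        filter_upwards [hq.coeFn_toL2 f] with x hx
        rw [hx, integral_const_mul]
        simp [mul_comm]

section Composition

variable {p : α → α → ℝ} {q : β → α → ℝ} {A₁ A₂ B₁ B₂ : ℝ≥0}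

-- Since `p` annihilates constants, the value of `q z` at `x` may be subtracted.
lemma enorm_integral_mul_le_lintegral (hp : IsSchurKernel μ μ p A₁ A₂)
    (hp_zero : ∀ x, ∫ y, p x y ∂μ = 0) (hq : IsSchurKernel ν μ q B₁ B₂) {h : β → ℝ}
    (hh : MemLp h 2 ν) :
    ∀ᵐ x ∂μ, ‖∫ y, p x y * ∫ z, q z y * h z ∂ν ∂μ‖ₑ ≤
      ∫⁻ z, (∫⁻ y, ‖p x y‖ₑ * ‖q z y - q z x‖ₑ ∂μ) * ‖h z‖ₑ ∂ν := by
  have h_int := hq.swap.ae_integrable hh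
  filter_upwards [h_int, hp.ae_integrable (hq.swap.memLp_integral hh)] with x hx hpx
  have hp_int : Integrable (p x) μ :=
    ⟨hp.measurable.of_uncurry_left.aestronglyMeasurable, (hp.row_le x).trans_lt coe_lt_top⟩
  calc ‖∫ y, p x y * ∫ z, q z y * h z ∂ν ∂μ‖ₑ
      = ‖∫ y, p x y * (∫ z, q z y * h z ∂ν - ∫ z, q z x * h z ∂ν) ∂μ‖ₑ := by
        simp_rw [mul_sub]
        rw [integral_sub hpx (hp_int.mul_const _), integral_mul_const, hp_zero, zero_mul, sub_zero]
    _ ≤ ∫⁻ y, ‖p x y‖ₑ * ∫⁻ z, ‖q z y - q z x‖ₑ * ‖h z‖ₑ ∂ν ∂μ := by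
        refine (enorm_integral_le_lintegral_enorm _).trans (lintegral_mono_ae ?_)
        filter_upwards [h_int] with y hy
        rw [enorm_mul, ← integral_sub hy hx]
        gcongr
        refine (enorm_integral_le_lintegral_enorm _).trans_eq (lintegral_congr fun z => ?_)
        rw [← sub_mul, enorm_mul]
    _ = ∫⁻ z, (∫⁻ y, ‖p x y‖ₑ * ‖q z y - q z x‖ₑ ∂μ) * ‖h z‖ₑ ∂ν := by
        have h_meas : AEMeasurable
            (fun w : α × β => ‖p x w.1‖ₑ * (‖q w.2 w.1 - q w.2 x‖ₑ * ‖h w.2‖ₑ)) (μ.prod ν) :=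
          (hp.measurable.of_uncurry_left.comp measurable_fst).enorm.aemeasurable.mul <|
            AEMeasurable.mul (by have := hq.measurable; fun_prop)
              hh.aestronglyMeasurable.comp_snd.enorm
        simp_rw [← lintegral_const_mul' _ _ enorm_ne_top, ← lintegral_mul_const' _ _ enorm_ne_top]
        rw [lintegral_lintegral_swap h_meas]
        simp_rw [mul_assoc]

lemma lintegral_mul_enorm_sub_le (hp : IsSchurKernel μ μ p A₁ A₂) (hq : IsSchurKernel ν μ q B₁ B₂)
    (x : α) :
    ∫⁻ z, ∫⁻ y, ‖p x y‖ₑ * ‖q z y - q z x‖ₑ ∂μ ∂ν ≤ (A₁ * (B₂ + B₂) : ℝ≥0) := by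
  have := hp.measurable
  have := hq.measurable
  rw [lintegral_lintegral_swap (by fun_prop)]
  calc ∫⁻ y, ∫⁻ z, ‖p x y‖ₑ * ‖q z y - q z x‖ₑ ∂ν ∂μ
      ≤ ∫⁻ y, ‖p x y‖ₑ * (B₂ + B₂) ∂μ := by
        gcongr with y
        rw [lintegral_const_mul' _ _ enorm_ne_top]
        gcongr
        calc ∫⁻ z, ‖q z y - q z x‖ₑ ∂ν
            ≤ ∫⁻ z, (‖q z y‖ₑ + ‖q z x‖ₑ) ∂ν := lintegral_mono fun z => enorm_sub_le
          _ = ∫⁻ z, ‖q z y‖ₑ ∂ν + ∫⁻ z, ‖q z x‖ₑ ∂ν := lintegral_add_left (by fun_prop) _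
          _ ≤ B₂ + B₂ := add_le_add (hq.col_le y) (hq.col_le x)
    _ = (∫⁻ y, ‖p x y‖ₑ ∂μ) * (B₂ + B₂) := lintegral_mul_const _ (by fun_prop)
    _ ≤ (A₁ * (B₂ + B₂) : ℝ≥0) := by push_cast; gcongr; exact hp.row_le x

open scoped InnerProduct in
lemma norm_toL2_comp_adjoint_le (hp : IsSchurKernel μ μ p A₁ A₂)
    (hp_zero : ∀ x, ∫ y, p x y ∂μ = 0) (hq : IsSchurKernel ν μ q B₁ B₂) {ε : ℝ≥0}
    (hε : ∀ z, ∫⁻ x, ∫⁻ y, ‖p x y‖ₑ * ‖q z y - q z x‖ₑ ∂μ ∂μ ≤ ε) :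
    ‖hp.toL2 ∘L (hq.toL2)†‖ ≤ √(A₁ * (B₂ + B₂) * ε : ℝ≥0) := by
  refine ContinuousLinearMap.opNorm_le_bound _ (Real.sqrt_nonneg _) fun h =>
    norm_le_sqrt_mul_norm_of_lintegral_sq_le ?_
  have hK : Measurable fun w : (α × β) × α => ‖p w.1.1 w.2‖ₑ * ‖q w.1.2 w.2 - q w.1.2 w.1.1‖ₑ := by
    have := hp.measurable
    have := hq.measurable
    fun_prop
  calc ∫⁻ x, ‖(hp.toL2 ∘L (hq.toL2)†) h x‖ₑ ^ 2 ∂μ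
      ≤ ∫⁻ x, (∫⁻ z, (∫⁻ y, ‖p x y‖ₑ * ‖q z y - q z x‖ₑ ∂μ) * ‖h z‖ₑ ∂ν) ^ 2 ∂μ := by
        rw [adjoint_toL2, ContinuousLinearMap.comp_apply]
        refine lintegral_mono_ae ?_
        filter_upwards [hp.coeFn_toL2_toLp (hq.swap.memLp_integral (Lp.memLp h)),
          hp.enorm_integral_mul_le_lintegral hp_zero hq (Lp.memLp h)] with x hx hx_le
        gcongr
        exact (congr_arg _ hx).trans_le hx_le
    _ ≤ (A₁ * (B₂ + B₂) : ℝ≥0) * ε * ∫⁻ z, ‖h z‖ₑ ^ 2 ∂ν := by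
        refine lintegral_sq_lintegral_mul_le (K := fun x z => ∫⁻ y, ‖p x y‖ₑ * ‖q z y - q z x‖ₑ ∂μ)
          hK.lintegral_prod_right' (fun x => ?_) hε (Lp.aestronglyMeasurable h).aemeasurable.enorm
        exact hp.lintegral_mul_enorm_sub_le hq x
    _ = (A₁ * (B₂ + B₂) * ε : ℝ≥0) * ∫⁻ z, ‖h z‖ₑ ^ 2 ∂ν := by push_cast; rfl

end Composition

end IsSchurKernel

section Family

variable {q : ℤ → α → α → ℝ} {A B r : ℝ≥0} [SFinite μ]

open scoped InnerProduct in
lemma norm_toL2_comp_adjoint_le_pow_natAbs (hq : ∀ k, IsSchurKernel μ μ (q k) A A)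
    (hq_zero : ∀ k x, ∫ y, q k x y ∂μ = 0)
    (hq_smooth : ∀ j k, j ≤ k → ∀ z, ∫⁻ x, ∫⁻ y, ‖q j x y‖ₑ * ‖q k z y - q k z x‖ₑ ∂μ ∂μ ≤
      (B * r ^ (2 * (k - j).natAbs) : ℝ≥0)) (j k : ℤ) :
    ‖(hq j).toL2 ∘L ((hq k).toL2)†‖ ≤ √(A * (A + A) * B : ℝ≥0) * r ^ (k - j).natAbs := by
  wlog hjk : j ≤ k generalizing j k
  · rw [← LinearIsometryEquiv.norm_map ContinuousLinearMap.adjoint,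
      ContinuousLinearMap.adjoint_comp, ContinuousLinearMap.adjoint_adjoint, ← Int.natAbs_neg,
      neg_sub]
    exact this k j (le_of_not_ge hjk)
  calc ‖(hq j).toL2 ∘L ((hq k).toL2)†‖
      ≤ √(A * (A + A) * (B * r ^ (2 * (k - j).natAbs)) : ℝ≥0) :=
        (hq j).norm_toL2_comp_adjoint_le (hq_zero j) (hq k) (hq_smooth j k hjk)
    _ = √((A * (A + A) * B : ℝ≥0) * ((r : ℝ) ^ (k - j).natAbs) ^ 2) := by
        rw [← pow_mul, mul_comm 2]; push_cast; ring_nf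
    _ = _ := by rw [Real.sqrt_mul (by positivity), Real.sqrt_sq (by positivity)]

theorem exists_tsum_lintegral_sq_le_of_schur (hr : r < 1)
    (hq : ∀ k, IsSchurKernel μ μ (q k) A A) (hq_zero : ∀ k x, ∫ y, q k x y ∂μ = 0)
    (hq_smooth : ∀ j k, j ≤ k → ∀ z, ∫⁻ x, ∫⁻ y, ‖q j x y‖ₑ * ‖q k z y - q k z x‖ₑ ∂μ ∂μ ≤
      (B * r ^ (2 * (k - j).natAbs) : ℝ≥0)) :
    ∃ C : ℝ≥0, ∀ f : α → ℝ, MemLp f 2 μ →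
      ∑' k, ∫⁻ x, ‖∫ y, q k x y * f y ∂μ‖ₑ ^ 2 ∂μ ≤ C * ∫⁻ x, ‖f x‖ₑ ^ 2 ∂μ := by
  have h_sum := (summable_pow_natAbs r.coe_nonneg hr).mul_left √(A * (A + A) * B : ℝ≥0)
  set c : ℤ → ℝ := fun d => √(A * (A + A) * B : ℝ≥0) * r ^ d.natAbs
  have hc_nonneg (d) : 0 ≤ c d := by positivity
  have h_row (j : ℤ) (s : Finset ℤ) : ∑ k ∈ s, c (k - j) ≤ ∑' d, c d := by
    rw [← (Equiv.subRight j).tsum_eq c]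
    exact ((Equiv.subRight j).summable_iff.2 h_sum).sum_le_tsum s fun _ _ => hc_nonneg _
  refine ⟨(∑' d, c d).toNNReal, fun f hf => ENNReal.summable.tsum_le_of_sum_le fun s => ?_⟩
  have h_orth := sum_norm_apply_sq_le_of_almost_orthogonal (T := fun k => (hq k).toL2) s
    (tsum_nonneg hc_nonneg) (a := fun j k => c (k - j))
    (fun j k => by simp only [c]; rw [← Int.natAbs_neg, neg_sub]) (h_row · s)
    (norm_toL2_comp_adjoint_le_pow_natAbs hq hq_zero hq_smooth) hf.toLp
  have h_left (k : ℤ) : ∫⁻ x, ‖∫ y, q k x y * f y ∂μ‖ₑ ^ 2 ∂μ = ‖(hq k).toL2 hf.toLp‖ₑ ^ 2 := by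
    rw [enorm_sq_eq_lintegral]
    refine lintegral_congr_ae ?_
    filter_upwards [(hq k).coeFn_toL2_toLp hf] with x hx using by rw [hx]
  rw [Finset.sum_congr rfl fun k _ => h_left k, ← eLpNorm_two_sq, ← Lp.enorm_toLp hf,
    ← ENNReal.ofReal_coe_nnreal, Real.coe_toNNReal _ (tsum_nonneg hc_nonneg)]
  simp_rw [← ofReal_norm, ← ENNReal.ofReal_pow (norm_nonneg _)]
  rw [← ENNReal.ofReal_sum_of_nonneg fun _ _ => by positivity,
    ← ENNReal.ofReal_mul (tsum_nonneg hc_nonneg)]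
  exact ENNReal.ofReal_le_ofReal h_orth

end Family
end Schur

section Modulus

variable {E F : Type*} [NormedAddCommGroup E] [NormedSpace ℝ E] [NormedAddCommGroup F]
  [NormedSpace ℝ F]

lemma enorm_add_sub_le_lintegral_fderiv {f : E → F} (hf : ContDiff ℝ 1 f) (x h : E) :
    ‖f (x + h) - f x‖ₑ ≤ ‖h‖ₑ * ∫⁻ t : ℝ in Set.Icc 0 1, ‖fderiv ℝ f (x + t • h)‖ₑ := by
  set g : ℝ → F := fun t => f (x + t • h)
  have hg (t : ℝ) : HasDerivAt g (fderiv ℝ f (x + t • h) h) t := by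
    have h_line : HasDerivAt (fun t : ℝ => x + t • h) h t := by
      simpa using ((hasDerivAt_id t).smul_const h).const_add x
    exact ((hf.differentiable one_ne_zero _).hasFDerivAt).comp_hasDerivAt t h_line
  calc ‖f (x + h) - f x‖ₑ = ‖g 1 - g 0‖ₑ := by simp [g]
    _ ≤ ∫⁻ t : ℝ in Set.Icc 0 1, ‖deriv g t‖ₑ :=
        enorm_sub_le_lintegral_deriv_of_contDiffOn_Icc
          (hf.comp (by fun_prop : ContDiff ℝ 1 fun t : ℝ => x + t • h)).contDiffOn zero_le_one
    _ ≤ ∫⁻ t : ℝ in Set.Icc 0 1, ‖h‖ₑ * ‖fderiv ℝ f (x + t • h)‖ₑ :=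
        lintegral_mono fun t => by
          rw [(hg t).deriv, mul_comm]
          exact ContinuousLinearMap.le_opENorm _ _
    _ = _ := lintegral_const_mul' _ _ enorm_ne_top

variable [MeasurableSpace E] [BorelSpace E] {μ : Measure E} [SFinite μ]
  [μ.IsAddLeftInvariant]

lemma lintegral_enorm_add_sub_le_mul_lintegral_fderiv {f : E → F} (hf : ContDiff ℝ 1 f) (h : E) :
    ∫⁻ x, ‖f (x + h) - f x‖ₑ ∂μ ≤ ‖h‖ₑ * ∫⁻ x, ‖fderiv ℝ f x‖ₑ ∂μ := by
  have h_cont : Continuous fun p : E × ℝ => ‖fderiv ℝ f (p.1 + p.2 • h)‖ₑ :=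
    ((hf.continuous_fderiv one_ne_zero).comp (by fun_prop)).enorm
  calc ∫⁻ x, ‖f (x + h) - f x‖ₑ ∂μ
      ≤ ∫⁻ x, ‖h‖ₑ * (∫⁻ t : ℝ in Set.Icc 0 1, ‖fderiv ℝ f (x + t • h)‖ₑ) ∂μ :=
        lintegral_mono fun x => enorm_add_sub_le_lintegral_fderiv hf x h
    _ = ‖h‖ₑ * ∫⁻ t : ℝ in Set.Icc 0 1, ∫⁻ x, ‖fderiv ℝ f (x + t • h)‖ₑ ∂μ := by
        rw [lintegral_const_mul' _ _ enorm_ne_top,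
          lintegral_lintegral_swap h_cont.measurable.aemeasurable]
    _ = ‖h‖ₑ * ∫⁻ x, ‖fderiv ℝ f x‖ₑ ∂μ := by
        simp only [lintegral_add_right_eq_self fun x => ‖fderiv ℝ f x‖ₑ, setLIntegral_const,
          Real.volume_Icc, sub_zero, ENNReal.ofReal_one, mul_one]

end Modulus

section Convolution

variable {G : Type*} [AddCommGroup G] [MeasurableSpace G] [MeasurableAdd₂ G] [MeasurableNeg G]
  {μ : Measure G} [SFinite μ] [μ.IsAddLeftInvariant] [μ.IsNegInvariant]

lemma lintegral_lintegral_mul_enorm_sub_le {p : G → G → ℝ} {g : G → ℝ}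
    {κ ω : G → ℝ≥0∞} (hκ : Measurable κ) (hg : Measurable g)
    (hp : ∀ x y, ‖p x y‖ₑ ≤ κ (x - y)) (hω : ∀ w, ∫⁻ x, ‖g (x - w) - g x‖ₑ ∂μ ≤ ω w) :
    ∫⁻ x, ∫⁻ y, ‖p x y‖ₑ * ‖g y - g x‖ₑ ∂μ ∂μ ≤ ∫⁻ w, κ w * ω w ∂μ := by
  have h_meas : Measurable fun q : G × G => κ q.2 * ‖g (q.1 - q.2) - g q.1‖ₑ := by fun_prop
  calc ∫⁻ x, ∫⁻ y, ‖p x y‖ₑ * ‖g y - g x‖ₑ ∂μ ∂μ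
      ≤ ∫⁻ x, ∫⁻ y, κ (x - y) * ‖g (x - (x - y)) - g x‖ₑ ∂μ ∂μ := by
        gcongr with x y
        · exact hp x y
        · rw [sub_sub_self]
    _ = ∫⁻ x, ∫⁻ w, κ w * ‖g (x - w) - g x‖ₑ ∂μ ∂μ :=
        lintegral_congr fun x => lintegral_sub_left_eq_self (fun w => κ w * ‖g (x - w) - g x‖ₑ) x
    _ = ∫⁻ w, ∫⁻ x, κ w * ‖g (x - w) - g x‖ₑ ∂μ ∂μ :=
        lintegral_lintegral_swap h_meas.aemeasurable
    _ ≤ ∫⁻ w, κ w * ω w ∂μ := by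
        gcongr with w
        rw [lintegral_const_mul _ (by fun_prop)]
        gcongr
        exact hω w

end Convolution

section CubeModulus

variable {n : ℕ} {ℓ : ℝ}

lemma volume_Ioc_diff_Ioc_add_le (a ℓ w : ℝ) :
    volume (Set.Ioc a (a + ℓ) \ Set.Ioc (a + w) (a + w + ℓ)) ≤ 2 * ‖w‖ₑ := by
  have h_sub : Set.Ioc a (a + ℓ) \ Set.Ioc (a + w) (a + w + ℓ) ⊆
      Set.Ioc a (a + w) ∪ Set.Ioc (a + w + ℓ) (a + ℓ) := by
    rintro t ⟨ht, htw⟩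
    simp only [Set.mem_union, Set.mem_Ioc] at ht htw ⊢
    grind
  calc _ ≤ volume (Set.Ioc a (a + w)) + volume (Set.Ioc (a + w + ℓ) (a + ℓ)) :=
        (measure_mono h_sub).trans (measure_union_le _ _)
    _ ≤ ‖w‖ₑ + ‖w‖ₑ := by
        rw [Real.volume_Ioc, Real.volume_Ioc, Real.enorm_eq_ofReal_abs]
        gcongr
        · linarith [le_abs_self w]
        · linarith [neg_abs_le w]
    _ = 2 * ‖w‖ₑ := (two_mul _).symm

lemma volume_pi_update_Ioc_diff_le (a w : EuclideanSpace ℝ (Fin n)) (hℓ : 0 < ℓ) (i : Fin n) :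
    volume (Set.univ.pi (Function.update (fun j => Set.Ioc (a j) (a j + ℓ)) i
      (Set.Ioc (a i) (a i + ℓ) \ Set.Ioc (a i + w i) (a i + w i + ℓ)))) ≤
      2 * ‖ℓ⁻¹ • w‖ₑ * volume (cube n a ℓ) := by
  have h_coord : ‖w i‖ₑ ≤ ‖ℓ⁻¹ • w‖ₑ * ENNReal.ofReal ℓ := by
    rw [enorm_smul, Real.enorm_of_nonneg (inv_nonneg.2 hℓ.le), ENNReal.ofReal_inv_of_pos hℓ,
      mul_right_comm, ENNReal.inv_mul_cancel (by simpa) ENNReal.ofReal_ne_top, one_mul]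
    exact enorm_le_iff_norm_le.2 (PiLp.norm_apply_le w i)
  rw [volume_pi_pi, volume_cube]
  calc ∏ j, volume (Function.update (fun j => Set.Ioc (a j) (a j + ℓ)) i
        (Set.Ioc (a i) (a i + ℓ) \ Set.Ioc (a i + w i) (a i + w i + ℓ)) j)
      ≤ ∏ j, (if j = i then 2 * ‖ℓ⁻¹ • w‖ₑ else 1) * ENNReal.ofReal ℓ := by
        refine Finset.prod_le_prod' fun j _ => ?_
        rcases eq_or_ne j i with rfl | hj
        · rw [Function.update_self, if_pos rfl, mul_assoc]
          exact (volume_Ioc_diff_Ioc_add_le _ _ _).trans (by gcongr)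
        · simp [hj]
    _ = 2 * ‖ℓ⁻¹ • w‖ₑ * ENNReal.ofReal ℓ ^ n := by
        rw [Finset.prod_mul_distrib, Finset.prod_ite_eq']
        simp

lemma volume_setOf_mem_cube_sub_notMem_le (a w : EuclideanSpace ℝ (Fin n)) (hℓ : 0 < ℓ) :
    volume {y | y ∈ cube n a ℓ ∧ y - w ∉ cube n a ℓ} ≤
      2 * n * ‖ℓ⁻¹ • w‖ₑ * volume (cube n a ℓ) := by
  set I : Fin n → Set ℝ := fun i => Set.Ioc (a i) (a i + ℓ)
  set J : Fin n → Set ℝ := fun i => I i \ Set.Ioc (a i + w i) (a i + w i + ℓ)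
  have h_sub : {y | y ∈ cube n a ℓ ∧ y - w ∉ cube n a ℓ} ⊆
      ⋃ i, WithLp.ofLp (p := 2) ⁻¹' Set.univ.pi (Function.update I i (J i)) := by
    rintro y ⟨hy, hyw⟩
    simp only [cube, Set.mem_ofPred_eq, not_forall, PiLp.sub_apply] at hy hyw
    obtain ⟨i, hi⟩ := hyw
    refine Set.mem_iUnion.2 ⟨i, fun j _ => ?_⟩
    rcases eq_or_ne j i with rfl | hj
    · rw [Function.update_self]
      exact ⟨hy j, fun h => hi ⟨by linarith [h.1], by linarith [h.2]⟩⟩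
    · rw [Function.update_of_ne hj]
      exact hy j
  have h_slab (i : Fin n) : volume (WithLp.ofLp (p := 2) ⁻¹'
      Set.univ.pi (Function.update I i (J i))) ≤ 2 * ‖ℓ⁻¹ • w‖ₑ * volume (cube n a ℓ) := by
    refine ((PiLp.volume_preserving_ofLp (Fin n)).measure_preimage
      (MeasurableSet.univ_pi fun j => ?_).nullMeasurableSet).trans_le
      (volume_pi_update_Ioc_diff_le a w hℓ i)
    rcases eq_or_ne j i with rfl | hj
    · simp [J, I, measurableSet_Ioc.diff]
    · simp [I, hj]
  calc volume {y | y ∈ cube n a ℓ ∧ y - w ∉ cube n a ℓ}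
      ≤ ∑ i, volume (WithLp.ofLp (p := 2) ⁻¹' Set.univ.pi (Function.update I i (J i))) :=
        (measure_mono h_sub).trans (measure_iUnion_fintype_le _ _)
    _ ≤ n • (2 * ‖ℓ⁻¹ • w‖ₑ * volume (cube n a ℓ)) := by
        simpa using Finset.sum_le_card_nsmul Finset.univ _ _ fun i _ => h_slab i
    _ = 2 * n * ‖ℓ⁻¹ • w‖ₑ * volume (cube n a ℓ) := by
        rw [nsmul_eq_mul]
        ring

lemma lintegral_enorm_indicator_cube_sub_le (a w : EuclideanSpace ℝ (Fin n)) (hℓ : 0 < ℓ) (c : ℝ) :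
    ∫⁻ x, ‖(cube n a ℓ).indicator (fun _ => c) (x - w) - (cube n a ℓ).indicator (fun _ => c) x‖ₑ ≤
      4 * n * ‖ℓ⁻¹ • w‖ₑ * (‖c‖ₑ * volume (cube n a ℓ)) := by
  set S : EuclideanSpace ℝ (Fin n) → Set (EuclideanSpace ℝ (Fin n)) := fun v =>
    {y | y ∈ cube n a ℓ ∧ y - v ∉ cube n a ℓ}
  have hS (v) : MeasurableSet (S v) :=
    (measurableSet_cube a ℓ).inter ((measurableSet_cube a ℓ).preimage (by fun_prop)).compl
  have h_le (x) : ‖(cube n a ℓ).indicator (fun _ => c) (x - w) -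
      (cube n a ℓ).indicator (fun _ => c) x‖ₑ ≤
      (S w).indicator (fun _ => ‖c‖ₑ) x + (S (-w)).indicator (fun _ => ‖c‖ₑ) (x - w) := by
    by_cases hx : x ∈ cube n a ℓ <;> by_cases hxw : x - w ∈ cube n a ℓ <;>
      simp [S, hx, hxw]
  calc _ ≤ ∫⁻ x, ((S w).indicator (fun _ => ‖c‖ₑ) x + (S (-w)).indicator (fun _ => ‖c‖ₑ) (x - w)) :=
        lintegral_mono h_le
    _ = ‖c‖ₑ * volume (S w) + ‖c‖ₑ * volume (S (-w)) := by
        rw [lintegral_add_left (measurable_const.indicator (hS w)),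
          lintegral_sub_right_eq_self ((S (-w)).indicator fun _ => ‖c‖ₑ),
          lintegral_indicator_const (hS _), lintegral_indicator_const (hS _)]
    _ ≤ ‖c‖ₑ * (2 * n * ‖ℓ⁻¹ • w‖ₑ * volume (cube n a ℓ)) +
        ‖c‖ₑ * (2 * n * ‖ℓ⁻¹ • (-w)‖ₑ * volume (cube n a ℓ)) := by
        gcongr <;> exact volume_setOf_mem_cube_sub_notMem_le a _ hℓ
    _ = 4 * n * ‖ℓ⁻¹ • w‖ₑ * (‖c‖ₑ * volume (cube n a ℓ)) := by
        rw [smul_neg, enorm_neg]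
        ring

end CubeModulus

section Dilation

variable {n : ℕ} {k : ℤ}

/-- The `L¹`-normalized dilation `φ_k(z) = 2^{-kn} φ(2^{-k} z)`, the convolution kernel of `Φ_k`. -/
def dilation (φ : EuclideanSpace ℝ (Fin n) → ℝ) (k : ℤ) (z : EuclideanSpace ℝ (Fin n)) : ℝ :=
  (2 : ℝ) ^ (-(k * (n : ℤ))) * φ ((2 : ℝ) ^ (-k) • z)

lemma continuous_dilation {φ : EuclideanSpace ℝ (Fin n) → ℝ} (hφ : Continuous φ) (k : ℤ) :
    Continuous (dilation φ k) :=
  continuous_const.mul (hφ.comp (continuous_const_smul _))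

lemma map_zpow_smul_volume (n : ℕ) (k : ℤ) :
    Measure.map (fun z : EuclideanSpace ℝ (Fin n) => (2 : ℝ) ^ (-k) • z) volume =
      ENNReal.ofReal (2 ^ (k * (n : ℤ))) • volume := by
  rw [Measure.map_addHaar_smul _ (by positivity), finrank_euclideanSpace, Fintype.card_fin,
    abs_of_pos (by positivity), zpow_neg, inv_pow, inv_inv, ← zpow_natCast, ← zpow_mul]

lemma lintegral_zpow_mul_comp_zpow_smul (k : ℤ) (F : EuclideanSpace ℝ (Fin n) → ℝ≥0∞) :
    ∫⁻ z, ENNReal.ofReal (2 ^ (-(k * (n : ℤ)))) * F ((2 : ℝ) ^ (-k) • z) = ∫⁻ u, F u := by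
  have h_emb : MeasurableEmbedding fun z : EuclideanSpace ℝ (Fin n) => (2 : ℝ) ^ (-k) • z :=
    measurableEmbedding_const_smul₀ (by positivity)
  rw [lintegral_const_mul' _ _ ENNReal.ofReal_ne_top, ← h_emb.lintegral_map F,
    map_zpow_smul_volume, lintegral_smul_measure, smul_eq_mul, ← mul_assoc,
    ← ENNReal.ofReal_mul (by positivity), ← zpow_add₀ two_ne_zero, neg_add_cancel, zpow_zero,
    ENNReal.ofReal_one, one_mul]

lemma integral_dilation (φ : EuclideanSpace ℝ (Fin n) → ℝ) (k : ℤ) :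
    ∫ z, dilation φ k z = ∫ u, φ u := by
  have h_emb : MeasurableEmbedding fun z : EuclideanSpace ℝ (Fin n) => (2 : ℝ) ^ (-k) • z :=
    measurableEmbedding_const_smul₀ (by positivity)
  simp only [dilation]
  rw [integral_const_mul, ← h_emb.integral_map φ, map_zpow_smul_volume, integral_smul_measure,
    ENNReal.toReal_ofReal (by positivity), smul_eq_mul, ← mul_assoc, ← zpow_add₀ two_ne_zero,
    neg_add_cancel, zpow_zero, one_mul]

lemma integrable_dilation {φ : EuclideanSpace ℝ (Fin n) → ℝ} (hφ : Integrable φ) (k : ℤ) :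
    Integrable (dilation φ k) :=
  (hφ.comp_smul (by positivity)).const_mul _

lemma lintegral_enorm_dilation_sub_le {φ : EuclideanSpace ℝ (Fin n) → ℝ} (hφ : ContDiff ℝ 1 φ)
    (k : ℤ) (h : EuclideanSpace ℝ (Fin n)) :
    ∫⁻ z, ‖dilation φ k (z + h) - dilation φ k z‖ₑ ≤
      ‖(2 : ℝ) ^ (-k) • h‖ₑ * ∫⁻ u, ‖fderiv ℝ φ u‖ₑ := by
  refine le_trans ?_ (lintegral_enorm_add_sub_le_mul_lintegral_fderiv hφ ((2 : ℝ) ^ (-k) • h))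
  rw [← lintegral_zpow_mul_comp_zpow_smul k fun u => ‖φ (u + (2 : ℝ) ^ (-k) • h) - φ u‖ₑ]
  refine lintegral_mono fun z => ?_
  simp only [dilation]
  rw [← mul_sub, enorm_mul, smul_add, Real.enorm_of_nonneg (by positivity)]

end Dilation

section DifferenceKernel

variable {n : ℕ} {φ : EuclideanSpace ℝ (Fin n) → ℝ} {j k : ℤ} {x y : EuclideanSpace ℝ (Fin n)}

/-- The integral kernel of `Φ_k - E_k`. -/
def differenceKernel (φ : EuclideanSpace ℝ (Fin n) → ℝ) (k : ℤ)
    (x y : EuclideanSpace ℝ (Fin n)) : ℝ :=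
  dilation φ k (x - y) - (dyadicCubeOf n k x).indicator (fun _ => (2 : ℝ) ^ (-(k * (n : ℤ)))) y

/-- The profile whose dilations dominate the kernels of `Φ_k - E_k`: the ball of radius `n` contains
every `2^{-k}(x - y)` with `x` and `y` in a common dyadic cube of side length `2^k`. -/
def kernelMajorant (φ : EuclideanSpace ℝ (Fin n) → ℝ) (u : EuclideanSpace ℝ (Fin n)) : ℝ≥0∞ :=
  ‖φ u‖ₑ + (Metric.closedBall 0 (n : ℝ)).indicator 1 u

lemma measurable_kernelMajorant (hφ : Continuous φ) : Measurable (kernelMajorant φ) :=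
  hφ.measurable.enorm.add (measurable_one.indicator Metric.isClosed_closedBall.measurableSet)

lemma measurable_differenceKernel (hφ : Continuous φ) (k : ℤ) :
    Measurable (Function.uncurry (differenceKernel φ k)) :=
  ((continuous_dilation hφ k).comp (continuous_fst.sub continuous_snd)).measurable.sub
    (measurable_const.indicator (measurableSet_setOf_mem_dyadicCubeOf n k))

lemma norm_zpow_neg_smul (k : ℤ) (z : EuclideanSpace ℝ (Fin n)) :
    ‖(2 : ℝ) ^ (-k) • z‖ = ‖z‖ / 2 ^ k := by
  rw [norm_smul, Real.norm_of_nonneg (by positivity), zpow_neg, div_eq_inv_mul]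

lemma enorm_differenceKernel_le (φ : EuclideanSpace ℝ (Fin n) → ℝ) (k : ℤ)
    (x y : EuclideanSpace ℝ (Fin n)) :
    ‖differenceKernel φ k x y‖ₑ ≤ ENNReal.ofReal (2 ^ (-(k * (n : ℤ)))) *
      kernelMajorant φ ((2 : ℝ) ^ (-k) • (x - y)) := by
  have h_ind : ‖(dyadicCubeOf n k x).indicator (fun _ => (2 : ℝ) ^ (-(k * (n : ℤ)))) y‖ₑ ≤
      ENNReal.ofReal (2 ^ (-(k * (n : ℤ)))) *
        (Metric.closedBall 0 (n : ℝ)).indicator 1 ((2 : ℝ) ^ (-k) • (x - y)) := by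
    by_cases hy : y ∈ dyadicCubeOf n k x
    · have h_ball : (2 : ℝ) ^ (-k) • (x - y) ∈ Metric.closedBall 0 (n : ℝ) := by
        rw [mem_closedBall_zero_iff, norm_zpow_neg_smul, div_le_iff₀ (by positivity)]
        exact norm_sub_le_of_mem_dyadicCubeOf (mem_dyadicCubeOf_comm.1 hy)
      rw [Set.indicator_of_mem hy, Set.indicator_of_mem h_ball, Pi.one_apply, mul_one,
        Real.enorm_of_nonneg (by positivity)]
    · simp [hy]
  calc ‖differenceKernel φ k x y‖ₑ ≤ ‖dilation φ k (x - y)‖ₑ +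
        ‖(dyadicCubeOf n k x).indicator (fun _ => (2 : ℝ) ^ (-(k * (n : ℤ)))) y‖ₑ := enorm_sub_le
    _ ≤ _ := by
        rw [kernelMajorant, mul_add, dilation, enorm_mul, Real.enorm_of_nonneg (by positivity)]
        gcongr

lemma lintegral_enorm_differenceKernel_right_le (φ : EuclideanSpace ℝ (Fin n) → ℝ) (k : ℤ)
    (x : EuclideanSpace ℝ (Fin n)) :
    ∫⁻ y, ‖differenceKernel φ k x y‖ₑ ≤ ∫⁻ u, kernelMajorant φ u := by
  calc ∫⁻ y, ‖differenceKernel φ k x y‖ₑ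
      ≤ ∫⁻ y, ENNReal.ofReal (2 ^ (-(k * (n : ℤ)))) *
          kernelMajorant φ ((2 : ℝ) ^ (-k) • (x - y)) :=
        lintegral_mono fun y => enorm_differenceKernel_le φ k x y
    _ = ∫⁻ z, ENNReal.ofReal (2 ^ (-(k * (n : ℤ)))) * kernelMajorant φ ((2 : ℝ) ^ (-k) • z) :=
        lintegral_sub_left_eq_self (fun z => ENNReal.ofReal (2 ^ (-(k * (n : ℤ)))) *
          kernelMajorant φ ((2 : ℝ) ^ (-k) • z)) x
    _ = ∫⁻ u, kernelMajorant φ u := lintegral_zpow_mul_comp_zpow_smul k _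

lemma lintegral_enorm_differenceKernel_left_le (φ : EuclideanSpace ℝ (Fin n) → ℝ) (k : ℤ)
    (y : EuclideanSpace ℝ (Fin n)) :
    ∫⁻ x, ‖differenceKernel φ k x y‖ₑ ≤ ∫⁻ u, kernelMajorant φ u := by
  calc ∫⁻ x, ‖differenceKernel φ k x y‖ₑ
      ≤ ∫⁻ x, ENNReal.ofReal (2 ^ (-(k * (n : ℤ)))) *
          kernelMajorant φ ((2 : ℝ) ^ (-k) • (x - y)) :=
        lintegral_mono fun x => enorm_differenceKernel_le φ k x y
    _ = ∫⁻ z, ENNReal.ofReal (2 ^ (-(k * (n : ℤ)))) * kernelMajorant φ ((2 : ℝ) ^ (-k) • z) :=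
        lintegral_sub_right_eq_self (fun z => ENNReal.ofReal (2 ^ (-(k * (n : ℤ)))) *
          kernelMajorant φ ((2 : ℝ) ^ (-k) • z)) y
    _ = ∫⁻ u, kernelMajorant φ u := lintegral_zpow_mul_comp_zpow_smul k _

lemma isSchurKernel_differenceKernel (hφ : Continuous φ) (h_fin : ∫⁻ u, kernelMajorant φ u ≠ ∞)
    (k : ℤ) : IsSchurKernel volume volume (differenceKernel φ k)
      (∫⁻ u, kernelMajorant φ u).toNNReal (∫⁻ u, kernelMajorant φ u).toNNReal where
  measurable := measurable_differenceKernel hφ k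
  row_le x := (lintegral_enorm_differenceKernel_right_le φ k x).trans_eq
    (ENNReal.coe_toNNReal h_fin).symm
  col_le y := (lintegral_enorm_differenceKernel_left_le φ k y).trans_eq
    (ENNReal.coe_toNNReal h_fin).symm

lemma integrable_dilation_sub (hφ : Integrable φ) (k : ℤ) (x : EuclideanSpace ℝ (Fin n)) :
    Integrable fun y => dilation φ k (x - y) :=
  (integrable_dilation hφ k).comp_sub_left x

lemma zpow_neg_mul_eq_inv_volume_dyadicCubeOf (n : ℕ) (k : ℤ) (x : EuclideanSpace ℝ (Fin n)) :
    (2 : ℝ) ^ (-(k * (n : ℤ))) = (volume.real (dyadicCubeOf n k x))⁻¹ := by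
  rw [Measure.real, volume_dyadicCubeOf, ENNReal.toReal_pow,
    ENNReal.toReal_ofReal (by positivity), zpow_neg, zpow_mul, zpow_natCast]

lemma integral_indicator_zpow_mul_eq_dyadicAvg (k : ℤ) (x : EuclideanSpace ℝ (Fin n))
    (f : EuclideanSpace ℝ (Fin n) → ℝ) :
    ∫ y, (dyadicCubeOf n k x).indicator (fun _ => (2 : ℝ) ^ (-(k * (n : ℤ)))) y * f y =
      dyadicAvg n k f x := by
  simp_rw [← Set.indicator_mul_left]
  rw [integral_indicator (measurableSet_dyadicCubeOf n k x), integral_const_mul, dyadicAvg,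
    setAverage_eq, zpow_neg_mul_eq_inv_volume_dyadicCubeOf, smul_eq_mul]

lemma integral_differenceKernel_mul {f : EuclideanSpace ℝ (Fin n) → ℝ}
    (hf : Integrable fun y => dilation φ k (x - y) * f y)
    (hfx : IntegrableOn f (dyadicCubeOf n k x)) :
    ∫ y, differenceKernel φ k x y * f y =
      (∫ y, dilation φ k (x - y) * f y) - dyadicAvg n k f x := by
  simp only [differenceKernel, sub_mul]
  rw [integral_sub hf, integral_indicator_zpow_mul_eq_dyadicAvg]
  simp_rw [← Set.indicator_mul_left]
  exact (integrable_indicator_iff (measurableSet_dyadicCubeOf n k x)).2 (hfx.const_mul _)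

lemma integral_differenceKernel (hφ : Integrable φ) (hφ_one : ∫ u, φ u = 1) (k : ℤ)
    (x : EuclideanSpace ℝ (Fin n)) : ∫ y, differenceKernel φ k x y = 0 := by
  have h := integral_differenceKernel_mul (k := k) (x := x) (f := fun _ => 1)
    (by simpa using integrable_dilation_sub hφ k x)
    (integrableOn_const (volume_dyadicCubeOf_ne_top n k x))
  simp only [mul_one] at h
  rw [h, integral_sub_left_eq_self (dilation φ k), integral_dilation, hφ_one, dyadicAvg,
    setAverage_const (volume_dyadicCubeOf_ne_zero n k x) (volume_dyadicCubeOf_ne_top n k x),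
    sub_self]

lemma lintegral_enorm_differenceKernel_sub_le (hφ : ContDiff ℝ 1 φ) (k : ℤ)
    (z w : EuclideanSpace ℝ (Fin n)) :
    ∫⁻ x, ‖differenceKernel φ k z (x - w) - differenceKernel φ k z x‖ₑ ≤
      ((∫⁻ u, ‖fderiv ℝ φ u‖ₑ) + 4 * n) * ‖(2 : ℝ) ^ (-k) • w‖ₑ := by
  set χ := (dyadicCubeOf n k z).indicator fun _ => (2 : ℝ) ^ (-(k * (n : ℤ)))
  have h_dil : ∫⁻ x, ‖dilation φ k (z - (x - w)) - dilation φ k (z - x)‖ₑ ≤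
      ‖(2 : ℝ) ^ (-k) • w‖ₑ * ∫⁻ u, ‖fderiv ℝ φ u‖ₑ := by
    simp_rw [sub_sub_eq_add_sub, add_sub_right_comm]
    rw [lintegral_sub_left_eq_self fun x => ‖dilation φ k (x + w) - dilation φ k x‖ₑ]
    exact lintegral_enorm_dilation_sub_le hφ k w
  have h_ind : ∫⁻ x, ‖χ (x - w) - χ x‖ₑ ≤ 4 * n * ‖(2 : ℝ) ^ (-k) • w‖ₑ := by
    simp only [χ, dyadicCubeOf_eq_cube]
    refine (lintegral_enorm_indicator_cube_sub_le _ w (by positivity) _).trans_eq ?_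
    rw [volume_cube, Real.enorm_of_nonneg (by positivity), ← ENNReal.ofReal_pow (by positivity),
      ← ENNReal.ofReal_mul (by positivity), ← zpow_natCast, ← zpow_mul, ← zpow_add₀ two_ne_zero,
      neg_add_cancel, zpow_zero, ENNReal.ofReal_one, mul_one, zpow_neg]
  calc ∫⁻ x, ‖differenceKernel φ k z (x - w) - differenceKernel φ k z x‖ₑ
      ≤ ∫⁻ x, (‖dilation φ k (z - (x - w)) - dilation φ k (z - x)‖ₑ + ‖χ (x - w) - χ x‖ₑ) :=
        lintegral_mono fun x => by
          simp only [differenceKernel]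
          rw [sub_sub_sub_comm]
          exact enorm_sub_le
    _ = (∫⁻ x, ‖dilation φ k (z - (x - w)) - dilation φ k (z - x)‖ₑ) +
          ∫⁻ x, ‖χ (x - w) - χ x‖ₑ :=
        lintegral_add_left (by have := (continuous_dilation hφ.continuous k); fun_prop) _
    _ ≤ _ := by
        rw [add_mul, mul_comm (∫⁻ u, _)]
        exact add_le_add h_dil h_ind

lemma enorm_zpow_neg_smul (j k : ℤ) (w : EuclideanSpace ℝ (Fin n)) :
    ‖(2 : ℝ) ^ (-k) • w‖ₑ = ENNReal.ofReal (2 ^ (j - k)) * ‖(2 : ℝ) ^ (-j) • w‖ₑ := by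
  rw [← Real.enorm_of_nonneg (by positivity), ← enorm_smul, smul_smul, ← zpow_add₀ two_ne_zero,
    sub_add_eq_add_sub, add_neg_cancel, zero_sub]

lemma lintegral_lintegral_differenceKernel_mul_sub_le (hφ : ContDiff ℝ 1 φ) (j k : ℤ)
    (z : EuclideanSpace ℝ (Fin n)) :
    ∫⁻ x, ∫⁻ y, ‖differenceKernel φ j x y‖ₑ *
        ‖differenceKernel φ k z y - differenceKernel φ k z x‖ₑ ≤
      ((∫⁻ u, ‖fderiv ℝ φ u‖ₑ) + 4 * n) * (∫⁻ u, kernelMajorant φ u * ‖u‖ₑ) *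
        ENNReal.ofReal (2 ^ (j - k)) := by
  set D := (∫⁻ u, ‖fderiv ℝ φ u‖ₑ) + 4 * n
  have h_meas := measurable_kernelMajorant hφ.continuous
  calc _ ≤ ∫⁻ w, ENNReal.ofReal (2 ^ (-(j * (n : ℤ)))) * kernelMajorant φ ((2 : ℝ) ^ (-j) • w) *
          (D * ‖(2 : ℝ) ^ (-k) • w‖ₑ) :=
        lintegral_lintegral_mul_enorm_sub_le (by fun_prop)
          ((measurable_differenceKernel hφ.continuous k).comp measurable_prodMk_left)
          (enorm_differenceKernel_le φ j) (lintegral_enorm_differenceKernel_sub_le hφ k z)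
    _ = ∫⁻ w, ENNReal.ofReal (2 ^ (-(j * (n : ℤ)))) * (D * ENNReal.ofReal (2 ^ (j - k)) *
          (kernelMajorant φ ((2 : ℝ) ^ (-j) • w) * ‖(2 : ℝ) ^ (-j) • w‖ₑ)) := by
        refine lintegral_congr fun w => ?_
        rw [enorm_zpow_neg_smul j k]
        ring
    _ = ∫⁻ u, D * ENNReal.ofReal (2 ^ (j - k)) * (kernelMajorant φ u * ‖u‖ₑ) :=
        lintegral_zpow_mul_comp_zpow_smul j
          fun u => D * ENNReal.ofReal (2 ^ (j - k)) * (kernelMajorant φ u * ‖u‖ₑ)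
    _ = D * (∫⁻ u, kernelMajorant φ u * ‖u‖ₑ) * ENNReal.ofReal (2 ^ (j - k)) := by
        rw [lintegral_const_mul _ (by fun_prop)]
        ring

end DifferenceKernel

section SquareFunction

variable {n : ℕ}

lemma lintegral_kernelMajorant_mul_enorm_pow_ne_top (φ : SchwartzMap (EuclideanSpace ℝ (Fin n)) ℝ)
    (p : ℕ) : ∫⁻ u, kernelMajorant φ u * ‖u‖ₑ ^ p ≠ ∞ := by
  have h_schwartz : ∫⁻ u, ‖φ u‖ₑ * ‖u‖ₑ ^ p ≠ ∞ := by
    refine ne_of_eq_of_ne (lintegral_congr fun u => ?_)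
      (φ.integrable_pow_mul volume p).hasFiniteIntegral.ne
    rw [enorm_mul, enorm_pow, enorm_norm, enorm_norm, mul_comm]
  have h_ball : ∫⁻ u : EuclideanSpace ℝ (Fin n),
      (Metric.closedBall 0 (n : ℝ)).indicator 1 u * ‖u‖ₑ ^ p ≠ ∞ := by
    refine ((lintegral_mono (g := (Metric.closedBall 0 (n : ℝ)).indicator fun _ => (n : ℝ≥0∞) ^ p)
      fun u => ?_).trans_lt ?_).ne
    · by_cases hu : u ∈ Metric.closedBall 0 (n : ℝ)
      · rw [Set.indicator_of_mem hu, Set.indicator_of_mem hu, Pi.one_apply, one_mul]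
        gcongr
        rw [← Real.enorm_natCast, enorm_le_iff_norm_le, Real.norm_natCast]
        exact mem_closedBall_zero_iff.1 hu
      · simp [hu]
    · rw [lintegral_indicator_const Metric.isClosed_closedBall.measurableSet]
      exact ENNReal.mul_lt_top (by finiteness) measure_closedBall_lt_top
  simp only [kernelMajorant, add_mul]
  rw [lintegral_add_left (by have := φ.continuous; fun_prop)]
  exact ENNReal.add_ne_top.2 ⟨h_schwartz, h_ball⟩

-- `3 / 4` is a rational ratio whose square is at least `1 / 2`.
lemma ofReal_two_zpow_sub_le {j k : ℤ} (hjk : j ≤ k) :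
    ENNReal.ofReal (2 ^ (j - k)) ≤ ((3 / 4 : ℝ≥0) ^ (2 * (k - j).natAbs) : ℝ≥0) := by
  obtain ⟨d, rfl⟩ := Int.le.dest hjk
  rw [ENNReal.ofReal, ENNReal.coe_le_coe, ← NNReal.coe_le_coe, Real.coe_toNNReal _ (by positivity),
    show j - (j + d) = -(d : ℤ) by ring, add_sub_cancel_left, Int.natAbs_natCast, zpow_neg,
    zpow_natCast, pow_mul, ← inv_pow]
  push_cast
  gcongr
  norm_num

theorem exists_tsum_lintegral_integral_differenceKernel_sq_le
    (φ : SchwartzMap (EuclideanSpace ℝ (Fin n)) ℝ) (hφ_one : ∫ u, φ u = 1) :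
    ∃ C : ℝ≥0, ∀ f : EuclideanSpace ℝ (Fin n) → ℝ, MemLp f 2 volume →
      ∑' k : ℤ, ∫⁻ x, ‖∫ y, differenceKernel φ k x y * f y‖ₑ ^ 2 ≤ C * ∫⁻ x, ‖f x‖ₑ ^ 2 := by
  have hφ : ContDiff ℝ 1 φ := φ.smooth 1
  have h_mass : ∫⁻ u, kernelMajorant φ u ≠ ∞ := by
    simpa using lintegral_kernelMajorant_mul_enorm_pow_ne_top φ 0
  set D := ((∫⁻ u, ‖fderiv ℝ φ u‖ₑ) + 4 * n) * (∫⁻ u, kernelMajorant φ u * ‖u‖ₑ)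
  have hD : D ≠ ∞ := by
    refine ENNReal.mul_ne_top (ENNReal.add_ne_top.2 ⟨?_, by finiteness⟩)
      (by simpa using lintegral_kernelMajorant_mul_enorm_pow_ne_top φ 1)
    exact (SchwartzMap.fderivCLM ℝ _ ℝ φ).integrable.hasFiniteIntegral.ne
  refine exists_tsum_lintegral_sq_le_of_schur (r := 3 / 4) (B := D.toNNReal) (by norm_num)
    (fun k => isSchurKernel_differenceKernel hφ.continuous h_mass k)
    (integral_differenceKernel φ.integrable hφ_one) fun j k hjk z => ?_
  rw [ENNReal.coe_mul, ENNReal.coe_toNNReal hD]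
  refine (lintegral_lintegral_differenceKernel_mul_sub_le hφ j k z).trans ?_
  gcongr
  exact ofReal_two_zpow_sub_le hjk

end SquareFunction

section CubeDilate

variable {n : ℕ} {a x y : EuclideanSpace ℝ (Fin n)} {ℓ : ℝ} {i : ℕ} {k : ℤ}

/-- The cube `∏_j (a_j - 2^i ℓ, a_j + 2^{i+1} ℓ]`, surrounding `cube n a ℓ` with a margin of at
least `2^i ℓ`; these cubes play the role of the dilates `2^i Q*` of `Q* = 3Q`. -/
def cubeDilate (a : EuclideanSpace ℝ (Fin n)) (ℓ : ℝ) (i : ℕ) : Set (EuclideanSpace ℝ (Fin n)) :=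
  cube n (WithLp.toLp 2 fun j => a j - 2 ^ i * ℓ) (3 * (2 ^ i * ℓ))

lemma mem_cubeDilate_iff :
    y ∈ cubeDilate a ℓ i ↔ ∀ j, a j - 2 ^ i * ℓ < y j ∧ y j ≤ a j + 2 * (2 ^ i * ℓ) := by
  simp only [cubeDilate, cube, Set.mem_ofPred_eq]
  refine forall_congr' fun j => and_congr_right fun _ => ?_
  rw [sub_add_eq_add_sub, add_sub_assoc, show 3 * (2 ^ i * ℓ) - 2 ^ i * ℓ = 2 * (2 ^ i * ℓ) by ring]

lemma measurableSet_cubeDilate (a : EuclideanSpace ℝ (Fin n)) (ℓ : ℝ) (i : ℕ) :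
    MeasurableSet (cubeDilate a ℓ i) :=
  measurableSet_cube _ _

lemma volume_cubeDilate (a : EuclideanSpace ℝ (Fin n)) (ℓ : ℝ) (i : ℕ) :
    volume (cubeDilate a ℓ i) = (3 * (2 ^ i * ENNReal.ofReal ℓ)) ^ n := by
  rw [cubeDilate, volume_cube, ENNReal.ofReal_mul (by positivity),
    ENNReal.ofReal_mul (by positivity), ENNReal.ofReal_pow (by positivity), ENNReal.ofReal_ofNat,
    ENNReal.ofReal_ofNat]

lemma volume_cubeDilate_ne_zero (a : EuclideanSpace ℝ (Fin n)) (hℓ : 0 < ℓ) (i : ℕ) :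
    volume (cubeDilate a ℓ i) ≠ 0 :=
  volume_cube_ne_zero _ (by positivity)

lemma volume_cubeDilate_ne_top (a : EuclideanSpace ℝ (Fin n)) (ℓ : ℝ) (i : ℕ) :
    volume (cubeDilate a ℓ i) ≠ ∞ :=
  volume_cube_ne_top _ _

lemma cubeDilate_subset_succ (hℓ : 0 < ℓ) (i : ℕ) : cubeDilate a ℓ i ⊆ cubeDilate a ℓ (i + 1) := by
  intro y hy
  have h_pos : 0 < 2 ^ i * ℓ := by positivity
  refine mem_cubeDilate_iff.2 fun j => ?_
  rw [pow_succ']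
  have := mem_cubeDilate_iff.1 hy j
  constructor <;> linarith

lemma exists_mem_cubeDilate (hℓ : 0 < ℓ) (a y : EuclideanSpace ℝ (Fin n)) :
    ∃ i, y ∈ cubeDilate a ℓ i := by
  obtain ⟨i, hi⟩ := pow_unbounded_of_one_lt (‖y - a‖ / ℓ) one_lt_two
  refine ⟨i, mem_cubeDilate_iff.2 fun j => ?_⟩
  have h_coord := abs_lt.1 ((PiLp.norm_apply_le (y - a) j).trans_lt ((div_lt_iff₀ hℓ).1 hi))
  rw [PiLp.sub_apply] at h_coord
  constructor <;> linarith

lemma compl_cubeDilate_zero_subset_iUnion (hℓ : 0 < ℓ) (a : EuclideanSpace ℝ (Fin n)) :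
    (cubeDilate a ℓ 0)ᶜ ⊆ ⋃ i, cubeDilate a ℓ (i + 1) \ cubeDilate a ℓ i := by
  classical
  intro y hy
  have h_exists := exists_mem_cubeDilate hℓ a y
  have h_spec := Nat.find_spec h_exists
  cases h_first : Nat.find h_exists with
  | zero => exact absurd (h_first ▸ h_spec) hy
  | succ i =>
    refine Set.mem_iUnion.2 ⟨i, ?_, Nat.find_min h_exists (h_first ▸ i.lt_succ_self)⟩
    rwa [h_first] at h_spec

lemma le_norm_sub_of_notMem_cubeDilate (hℓ : 0 < ℓ) (hx : x ∈ cube n a ℓ)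
    (hy : y ∉ cubeDilate a ℓ i) : 2 ^ i * ℓ ≤ ‖x - y‖ := by
  rw [mem_cubeDilate_iff, not_forall] at hy
  obtain ⟨j, hj⟩ := hy
  refine le_trans ?_ (PiLp.norm_apply_le (x - y) j)
  have h_le : ℓ ≤ 2 ^ i * ℓ := le_mul_of_one_le_left hℓ.le (one_le_pow₀ one_le_two)
  rw [PiLp.sub_apply, Real.norm_eq_abs, le_abs]
  by_cases h : a j - 2 ^ i * ℓ < y j
  · right
    linarith [not_le.1 fun h' => hj ⟨h, h'⟩, hx j]
  · left
    linarith [hx j]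

lemma dyadicCubeOf_subset_cubeDilate (hx : x ∈ cube n a ℓ) (hk : (2 : ℝ) ^ k ≤ ℓ) :
    dyadicCubeOf n k x ⊆ cubeDilate a ℓ 0 := by
  intro y hy
  have hxx := mem_dyadicCubeOf_self k x
  rw [dyadicCubeOf_eq_cube] at hy hxx
  refine mem_cubeDilate_iff.2 fun j => ?_
  constructor <;> linarith [hx j, hy j, hxx j]

lemma enorm_le_div_of_notMem_cubeDilate {p : EuclideanSpace ℝ (Fin n) → ℝ} {D : ℝ≥0∞} {m : ℕ}
    (hp : ∀ z, ‖z‖ₑ ^ m * ‖p z‖ₑ ≤ D) (hℓ : 0 < ℓ) (hx : x ∈ cube n a ℓ)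
    (hy : y ∉ cubeDilate a ℓ i) : ‖p (x - y)‖ₑ ≤ D / (2 ^ i * ENNReal.ofReal ℓ) ^ m := by
  have h_dist := ENNReal.ofReal_le_ofReal (le_norm_sub_of_notMem_cubeDilate hℓ hx hy)
  rw [ENNReal.ofReal_mul (by positivity), ENNReal.ofReal_pow two_pos.le, ENNReal.ofReal_ofNat,
    ofReal_norm] at h_dist
  rw [ENNReal.le_div_iff_mul_le (.inl (by simp [hℓ])) (.inl (by finiteness)), mul_comm]
  exact le_trans (by gcongr) (hp (x - y))

end CubeDilate

lemma two_pow_div_two_pow_mul_sq (i : ℕ) (t : ℝ≥0∞) :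
    (2 : ℝ≥0∞) ^ i / (2 ^ i * t) ^ 2 = 2⁻¹ ^ i / t ^ 2 := by
  calc (2 : ℝ≥0∞) ^ i / (2 ^ i * t) ^ 2 = 2 ^ i * 1 / (2 ^ i * (2 ^ i * t ^ 2)) := by ring_nf
    _ = 1 / (2 ^ i * t ^ 2) := ENNReal.mul_div_mul_left _ _ (by simp) (by finiteness)
    _ = 2⁻¹ ^ i / t ^ 2 := by
        rw [one_div, ENNReal.mul_inv (.inl (by simp)) (.inl (by finiteness)), ENNReal.inv_pow,
          div_eq_mul_inv]

lemma div_pow_add_mul_pow {s : ℝ≥0∞} (hs₀ : s ≠ 0) (hs : s ≠ ∞) (t : ℝ≥0∞) (m k : ℕ) :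
    t / s ^ (m + k) * s ^ m = t / s ^ k := by
  rw [mul_comm, ← mul_div_assoc, pow_add]
  exact ENNReal.mul_div_mul_left _ _ (pow_ne_zero _ hs₀) (by finiteness)

namespace HasBMOBound

variable {n : ℕ} {b : EuclideanSpace ℝ (Fin n) → ℝ} {M : ℝ≥0} {a x : EuclideanSpace ℝ (Fin n)}
  {ℓ : ℝ} {p : EuclideanSpace ℝ (Fin n) → ℝ} {D : ℝ≥0}

lemma oscillation_cubeDilate_le (hb : HasBMOBound b M) (hℓ : 0 < ℓ) (i : ℕ) :
    ⨍⁻ y in cubeDilate a ℓ i, ‖b y - ⨍ z in cubeDilate a ℓ i, b z‖ₑ ∂volume ≤ M :=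
  hb.oscillation_le _ _ (by positivity)

lemma enorm_average_cubeDilate_sub_succ_le (hb : HasBMOBound b M) (hℓ : 0 < ℓ) (i : ℕ) :
    ‖(⨍ y in cubeDilate a ℓ i, b y) - ⨍ y in cubeDilate a ℓ (i + 1), b y‖ₑ ≤ 2 ^ n * M :=
  calc _ ≤ ⨍⁻ y in cubeDilate a ℓ i, ‖b y - ⨍ z in cubeDilate a ℓ (i + 1), b z‖ₑ ∂volume :=
        enorm_setAverage_sub_le (integrableOn_cube hb.locallyIntegrable _ _)
          (volume_cubeDilate_ne_zero _ hℓ _) (volume_cubeDilate_ne_top _ _ _) _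
    _ ≤ 2 ^ n * ⨍⁻ y in cubeDilate a ℓ (i + 1),
          ‖b y - ⨍ z in cubeDilate a ℓ (i + 1), b z‖ₑ ∂volume :=
        setLAverage_le_mul_of_subset (cubeDilate_subset_succ hℓ i)
          (volume_cubeDilate_ne_zero _ hℓ _) (volume_cubeDilate_ne_top _ _ _)
          (by rw [volume_cubeDilate, volume_cubeDilate, ← mul_pow]; ring_nf; rfl) _
    _ ≤ 2 ^ n * M := by
        gcongr
        exact hb.oscillation_cubeDilate_le hℓ _

lemma enorm_average_cubeDilate_sub_zero_le (hb : HasBMOBound b M) (hℓ : 0 < ℓ) (i : ℕ) :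
    ‖(⨍ y in cubeDilate a ℓ i, b y) - ⨍ y in cubeDilate a ℓ 0, b y‖ₑ ≤ i * (2 ^ n * M) := by
  induction i with
  | zero => simp
  | succ i ih =>
    rw [← sub_add_sub_cancel _ (⨍ y in cubeDilate a ℓ i, b y), Nat.cast_succ, add_mul, one_mul,
      add_comm (_ * _)]
    refine (enorm_add_le _ _).trans (add_le_add ?_ ih)
    rw [enorm_sub_rev]
    exact hb.enorm_average_cubeDilate_sub_succ_le hℓ i

lemma setLIntegral_cubeDilate_le (hb : HasBMOBound b M) (hℓ : 0 < ℓ) (i : ℕ) :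
    ∫⁻ y in cubeDilate a ℓ i, ‖b y - ⨍ z in cubeDilate a ℓ 0, b z‖ₑ ≤
      (i + 1) * (2 ^ n * M) * volume (cubeDilate a ℓ i) := by
  set c := ⨍ z in cubeDilate a ℓ 0, b z
  set c' := ⨍ z in cubeDilate a ℓ i, b z
  have h₀ : volume (cubeDilate a ℓ i) ≠ 0 := volume_cubeDilate_ne_zero _ hℓ _
  have h : volume (cubeDilate a ℓ i) ≠ ∞ := volume_cubeDilate_ne_top _ _ _
  rw [← ENNReal.div_le_iff_le_mul (.inl h₀) (.inl h), ← setLAverage_eq]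
  calc ⨍⁻ y in cubeDilate a ℓ i, ‖b y - c‖ₑ ∂volume
      ≤ ⨍⁻ y in cubeDilate a ℓ i, (‖c' - c‖ₑ + ‖b y - c'‖ₑ) ∂volume :=
        setLAverage_mono_of_forall_mem (measurableSet_cubeDilate _ _ _) fun y _ => by
          rw [← sub_add_sub_cancel (b y) c' c, add_comm]
          exact enorm_add_le _ _
    _ = ‖c' - c‖ₑ + ⨍⁻ y in cubeDilate a ℓ i, ‖b y - c'‖ₑ ∂volume := setLAverage_const_add h₀ h _ _
    _ ≤ i * (2 ^ n * M) + 1 * (2 ^ n * M) := by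
        gcongr
        · exact hb.enorm_average_cubeDilate_sub_zero_le hℓ i
        · refine (hb.oscillation_cubeDilate_le hℓ i).trans ?_
          rw [one_mul]
          exact le_mul_of_one_le_left' (one_le_pow₀ one_le_two)
    _ = (i + 1) * (2 ^ n * M) := (add_mul _ _ _).symm

lemma setLIntegral_cubeDilate_succ_le (hb : HasBMOBound b M) (hℓ : 0 < ℓ) (i : ℕ) :
    ∫⁻ y in cubeDilate a ℓ (i + 1), ‖b y - ⨍ z in cubeDilate a ℓ 0, b z‖ₑ ≤
      2 * 2 ^ i * (2 ^ n * M) * (6 * (2 ^ i * ENNReal.ofReal ℓ)) ^ n := by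
  refine (hb.setLIntegral_cubeDilate_le hℓ _).trans ?_
  have h_index : ((i + 1 : ℕ) + 1 : ℝ≥0∞) ≤ 2 * 2 ^ i := by
    rw [← pow_succ']
    exact_mod_cast Nat.lt_two_pow_self
  have h_volume : volume (cubeDilate a ℓ (i + 1)) = (6 * (2 ^ i * ENNReal.ofReal ℓ)) ^ n := by
    rw [volume_cubeDilate, pow_succ', mul_assoc 2, ← mul_assoc 3]
    norm_num
  rw [h_volume]
  exact mul_le_mul_left (mul_le_mul_left h_index _) _

lemma setLIntegral_ring_le (hb : HasBMOBound b M) (hℓ : 0 < ℓ) (hx : x ∈ cube n a ℓ)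
    (hp : ∀ z, ‖z‖ₑ ^ (n + 2) * ‖p z‖ₑ ≤ D) (i : ℕ) :
    ∫⁻ y in cubeDilate a ℓ (i + 1) \ cubeDilate a ℓ i,
        ‖p (x - y) * (b y - ⨍ z in cubeDilate a ℓ 0, b z)‖ₑ ≤
      2 * 12 ^ n * D * M / ENNReal.ofReal ℓ ^ 2 * 2⁻¹ ^ i := by
  set c := ⨍ z in cubeDilate a ℓ 0, b z
  set s := 2 ^ i * ENNReal.ofReal ℓ with hs
  have hs₀ : s ≠ 0 := by simp [s, hℓ]
  have hs_top : s ≠ ∞ := by finiteness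
  calc _ ≤ ∫⁻ y in cubeDilate a ℓ (i + 1) \ cubeDilate a ℓ i, D / s ^ (n + 2) * ‖b y - c‖ₑ :=
        setLIntegral_mono' ((measurableSet_cubeDilate _ _ _).diff
          (measurableSet_cubeDilate _ _ _)) fun y hy => by
            rw [enorm_mul]
            gcongr
            exact enorm_le_div_of_notMem_cubeDilate hp hℓ hx hy.2
    _ = D / s ^ (n + 2) * ∫⁻ y in cubeDilate a ℓ (i + 1) \ cubeDilate a ℓ i, ‖b y - c‖ₑ :=
        lintegral_const_mul' _ _ (by finiteness)
    _ ≤ D / s ^ (n + 2) * (2 * 2 ^ i * (2 ^ n * M) * (6 * s) ^ n) := by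
        gcongr
        exact (lintegral_mono_set Set.sdiff_subset).trans (hb.setLIntegral_cubeDilate_succ_le hℓ i)
    _ = 2 * 12 ^ n * D * M * (2 ^ i / s ^ 2) := by
        rw [mul_pow 6 s, ← div_pow_add_mul_pow hs₀ hs_top _ n 2,
          show (12 : ℝ≥0∞) ^ n = 2 ^ n * 6 ^ n by rw [← mul_pow]; norm_num, div_eq_mul_inv,
          div_eq_mul_inv]
        clear_value s
        ring
    _ = 2 * 12 ^ n * D * M / ENNReal.ofReal ℓ ^ 2 * 2⁻¹ ^ i := by
        rw [hs, two_pow_div_two_pow_mul_sq, div_eq_mul_inv, div_eq_mul_inv]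
        ring

lemma setLIntegral_compl_cubeDilate_le (hb : HasBMOBound b M) (hℓ : 0 < ℓ) (hx : x ∈ cube n a ℓ)
    (hp : ∀ z, ‖z‖ₑ ^ (n + 2) * ‖p z‖ₑ ≤ D) :
    ∫⁻ y in (cubeDilate a ℓ 0)ᶜ, ‖p (x - y) * (b y - ⨍ z in cubeDilate a ℓ 0, b z)‖ₑ ≤
      4 * 12 ^ n * D * M / ENNReal.ofReal ℓ ^ 2 := by
  set c := ⨍ z in cubeDilate a ℓ 0, b z
  calc ∫⁻ y in (cubeDilate a ℓ 0)ᶜ, ‖p (x - y) * (b y - c)‖ₑ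
      ≤ ∑' i, ∫⁻ y in cubeDilate a ℓ (i + 1) \ cubeDilate a ℓ i, ‖p (x - y) * (b y - c)‖ₑ :=
        (lintegral_mono_set (compl_cubeDilate_zero_subset_iUnion hℓ a)).trans
          (lintegral_iUnion_le _ _)
    _ ≤ ∑' i : ℕ, 2 * 12 ^ n * D * M / ENNReal.ofReal ℓ ^ 2 * 2⁻¹ ^ i :=
        ENNReal.tsum_le_tsum fun i => hb.setLIntegral_ring_le hℓ hx hp i
    _ = 4 * 12 ^ n * D * M / ENNReal.ofReal ℓ ^ 2 := by
        rw [ENNReal.tsum_mul_left, ENNReal.tsum_geometric, ENNReal.one_sub_inv_two, inv_inv,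
          div_eq_mul_inv, div_eq_mul_inv]
        ring

lemma integrable_mul_sub_average (hb : HasBMOBound b M) (hℓ : 0 < ℓ) (hx : x ∈ cube n a ℓ)
    (hp_cont : Continuous p) (hp : ∀ z, ‖z‖ₑ ^ (n + 2) * ‖p z‖ₑ ≤ D) :
    Integrable fun y => p (x - y) * (b y - ⨍ z in cubeDilate a ℓ 0, b z) := by
  set c := ⨍ z in cubeDilate a ℓ 0, b z
  have hb_sub : LocallyIntegrable fun y => b y - c :=
    hb.locallyIntegrable.sub (locallyIntegrable_const c)
  have hp_sub : Continuous fun y => p (x - y) := hp_cont.comp (continuous_const.sub continuous_id)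
  rw [← integrableOn_univ, ← Set.union_compl_self (cubeDilate a ℓ 0)]
  refine IntegrableOn.union ?_ ⟨?_, ?_⟩
  · exact (integrableOn_cube hb_sub _ _).continuousOn_mul_of_subset hp_sub.continuousOn
      (isBounded_cube _ _).isCompact_closure (measurableSet_cubeDilate _ _ _) subset_closure
  · exact (hp_sub.aestronglyMeasurable.mul hb_sub.aestronglyMeasurable).restrict
  · exact (hb.setLIntegral_compl_cubeDilate_le hℓ hx hp).trans_lt
      (ENNReal.div_lt_top (by finiteness) (by simp [hℓ]))

end HasBMOBound

section SplittingOfTheDifference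

variable {n : ℕ} {b : EuclideanSpace ℝ (Fin n) → ℝ} {k : ℤ} {x : EuclideanSpace ℝ (Fin n)}

lemma exists_enorm_pow_mul_dilation_le (φ : SchwartzMap (EuclideanSpace ℝ (Fin n)) ℝ) (m : ℕ) :
    ∃ C : ℝ≥0, ∀ (k : ℤ) (z : EuclideanSpace ℝ (Fin n)),
      ‖z‖ₑ ^ (n + m) * ‖dilation φ k z‖ₑ ≤ (C * (2 ^ k) ^ m : ℝ≥0) := by
  obtain ⟨C, hC_pos, hC⟩ := φ.decay (n + m) 0
  lift C to ℝ≥0 using hC_pos.le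
  refine ⟨C, fun k z => ?_⟩
  simp only [norm_iteratedFDeriv_zero] at hC
  have h_real : ‖z‖ ^ (n + m) * ‖dilation φ k z‖ ≤ C * (2 ^ k) ^ m :=
    calc ‖z‖ ^ (n + m) * ‖dilation φ k z‖
        = ‖(2 : ℝ) ^ (-k) • z‖ ^ (n + m) * ‖φ ((2 : ℝ) ^ (-k) • z)‖ * (2 ^ k) ^ m := by
          rw [norm_zpow_neg_smul, div_pow, dilation, norm_mul, Real.norm_of_nonneg (by positivity),
            zpow_neg, zpow_mul, zpow_natCast]
          have h_scale : (2 : ℝ) ^ k ≠ 0 := by positivity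
          generalize (2 : ℝ) ^ k = r at h_scale ⊢
          field_simp
          ring
      _ ≤ C * (2 ^ k) ^ m := by
          gcongr
          exact hC _
  rw [← ofReal_norm, ← ofReal_norm, ← ENNReal.ofReal_pow (norm_nonneg _),
    ← ENNReal.ofReal_mul (by positivity), ← ENNReal.ofReal_coe_nnreal]
  exact ENNReal.ofReal_le_ofReal (by exact_mod_cast h_real)

lemma integral_dilation_mul_sub_const {φ : EuclideanSpace ℝ (Fin n) → ℝ} (hφ : Integrable φ)
    (hφ_one : ∫ u, φ u = 1) {c : ℝ} (hc : Integrable fun y => dilation φ k (x - y) * (b y - c)) :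
    ∫ y, dilation φ k (x - y) * (b y - c) = (∫ y, dilation φ k (x - y) * b y) - c := by
  have h_const := (integrable_dilation_sub hφ k x).mul_const c
  have h_split (y) : dilation φ k (x - y) * b y =
      dilation φ k (x - y) * (b y - c) + dilation φ k (x - y) * c := by ring
  simp_rw [h_split]
  rw [integral_add hc h_const, integral_mul_const, integral_sub_left_eq_self (dilation φ k),
    integral_dilation, hφ_one, one_mul, add_sub_cancel_right]

lemma dyadicAvg_indicator_sub_const (hb : LocallyIntegrable b) {s : Set (EuclideanSpace ℝ (Fin n))}
    (hs : dyadicCubeOf n k x ⊆ s) (c : ℝ) :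
    dyadicAvg n k (s.indicator fun y => b y - c) x = dyadicAvg n k b x - c := by
  rw [dyadicAvg, setAverage_congr_fun (measurableSet_dyadicCubeOf n k x)
    (.of_forall fun y hy => Set.indicator_of_mem (hs hy) _)]
  refine setAverage_sub_const ?_ (volume_dyadicCubeOf_ne_zero n k x)
    (volume_dyadicCubeOf_ne_top n k x) c
  rw [dyadicCubeOf_eq_cube]
  exact integrableOn_cube hb _ _

lemma schwartzConv_sub_dyadicAvg_eq (φ : SchwartzMap (EuclideanSpace ℝ (Fin n)) ℝ)
    (hφ_one : ∫ u, φ u = 1) (hb : LocallyIntegrable b) {s : Set (EuclideanSpace ℝ (Fin n))}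
    (hs : MeasurableSet s) (hxs : dyadicCubeOf n k x ⊆ s) {c : ℝ}
    (hc : Integrable fun y => dilation φ k (x - y) * (b y - c)) :
    schwartzConv n φ k b x - dyadicAvg n k b x =
      (∫ y, differenceKernel φ k x y * s.indicator (fun y => b y - c) y) +
        ∫ y in sᶜ, dilation φ k (x - y) * (b y - c) := by
  have h_near : (fun y => dilation φ k (x - y) * s.indicator (fun y => b y - c) y) =
      s.indicator fun y => dilation φ k (x - y) * (b y - c) := by
    funext y
    exact (Set.indicator_mul_right s (fun y => dilation φ k (x - y)) _).symm
  have h_conv : schwartzConv n φ k b x - c = ∫ y, dilation φ k (x - y) * (b y - c) :=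
    (integral_dilation_mul_sub_const φ.integrable hφ_one hc).symm
  rw [integral_differenceKernel_mul, h_near, integral_indicator hs,
    dyadicAvg_indicator_sub_const hb hxs, sub_add_eq_add_sub, integral_add_compl hs hc, ← h_conv,
    sub_sub_sub_cancel_right]
  · rw [h_near]
    exact hc.indicator hs
  · rw [dyadicCubeOf_eq_cube]
    exact (integrableOn_cube (hb.sub (locallyIntegrable_const c)) _ _).indicator hs

end SplittingOfTheDifference

lemma tsum_ofReal_two_zpow_div_le {ℓ : ℝ} (hℓ : 0 < ℓ) :
    ∑' k : {k : ℤ // (2 : ℝ) ^ k ≤ ℓ}, ENNReal.ofReal (2 ^ (k : ℤ) / ℓ) ≤ 2 := by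
  set K := Int.log 2 ℓ
  have h_le (k : {k : ℤ // (2 : ℝ) ^ k ≤ ℓ}) : (k : ℤ) ≤ K :=
    (Int.zpow_le_iff_le_log one_lt_two hℓ).1 (by exact_mod_cast k.2)
  have h_K : (2 : ℝ) ^ K ≤ ℓ := by exact_mod_cast Int.zpow_log_le_self one_lt_two hℓ
  have h_inj : Function.Injective fun k : {k : ℤ // (2 : ℝ) ^ k ≤ ℓ} => (K - k).toNat := by
    intro k k' h
    have := h_le k
    have := h_le k'
    exact Subtype.ext (by simp only at h; lia)
  calc ∑' k : {k : ℤ // (2 : ℝ) ^ k ≤ ℓ}, ENNReal.ofReal (2 ^ (k : ℤ) / ℓ)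
      ≤ ∑' k : {k : ℤ // (2 : ℝ) ^ k ≤ ℓ}, 2⁻¹ ^ (K - k).toNat := ENNReal.tsum_le_tsum fun k => by
        have h_ratio : (2 : ℝ) ^ (k : ℤ) / ℓ ≤ 2⁻¹ ^ (K - k).toNat := by
          rw [inv_pow, ← zpow_natCast, Int.toNat_of_nonneg (sub_nonneg.2 (h_le k)), ← zpow_neg,
            neg_sub, zpow_sub₀ two_ne_zero]
          gcongr
        refine (ENNReal.ofReal_le_ofReal h_ratio).trans_eq ?_
        rw [ENNReal.ofReal_pow (by positivity), ENNReal.ofReal_inv_of_pos two_pos,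
          ENNReal.ofReal_ofNat]
    _ ≤ ∑' i : ℕ, 2⁻¹ ^ i := ENNReal.tsum_comp_le_tsum_of_injective h_inj fun i => 2⁻¹ ^ i
    _ = 2 := by rw [ENNReal.tsum_geometric, ENNReal.one_sub_inv_two, inv_inv]

namespace HasBMOBound

variable {n : ℕ} {b : EuclideanSpace ℝ (Fin n) → ℝ} {M : ℝ≥0} {a x : EuclideanSpace ℝ (Fin n)}
  {ℓ : ℝ}

lemma enorm_setIntegral_compl_cubeDilate_le {φ : EuclideanSpace ℝ (Fin n) → ℝ} {C : ℝ≥0}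
    (hb : HasBMOBound b M) (hℓ : 0 < ℓ) (hx : x ∈ cube n a ℓ) (k : ℤ)
    (hφ : ∀ z, ‖z‖ₑ ^ (n + 2) * ‖dilation φ k z‖ₑ ≤ (C * (2 ^ k) ^ 2 : ℝ≥0)) :
    ‖∫ y in (cubeDilate a ℓ 0)ᶜ, dilation φ k (x - y) * (b y - ⨍ z in cubeDilate a ℓ 0, b z)‖ₑ ≤
      4 * 12 ^ n * C * M * ENNReal.ofReal (2 ^ k / ℓ) ^ 2 := by
  have h_two : ((2 ^ k : ℝ≥0) : ℝ≥0∞) = ENNReal.ofReal (2 ^ k) := by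
    rw [← ENNReal.ofReal_coe_nnreal, NNReal.coe_zpow, NNReal.coe_ofNat]
  calc _ ≤ _ := enorm_integral_le_lintegral_enorm _
    _ ≤ 4 * 12 ^ n * (C * (2 ^ k) ^ 2 : ℝ≥0) * M / ENNReal.ofReal ℓ ^ 2 :=
        hb.setLIntegral_compl_cubeDilate_le hℓ hx hφ
    _ = 4 * 12 ^ n * C * M * ENNReal.ofReal (2 ^ k / ℓ) ^ 2 := by
        rw [ENNReal.coe_mul, ENNReal.coe_pow, h_two, ENNReal.ofReal_div_of_pos hℓ, div_eq_mul_inv,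
          div_eq_mul_inv, mul_pow, ENNReal.inv_pow]
        ring

lemma lintegral_enorm_sq_indicator_le (hb : HasBMOBound b M) (hℓ : 0 < ℓ) :
    ∫⁻ y, ‖(cubeDilate a ℓ 0).indicator (fun y => b y - ⨍ z in cubeDilate a ℓ 0, b z) y‖ₑ ^ 2 ≤
      3 ^ n * (32 + (2 ^ n + 4) ^ 2) * M ^ 2 * volume (cube n a ℓ) := by
  set c := ⨍ z in cubeDilate a ℓ 0, b z
  have h_sq : ⨍⁻ y in cubeDilate a ℓ 0, ‖b y - c‖ₑ ^ 2 ∂volume ≤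
      (32 + (2 ^ n + 4) ^ 2) * M ^ 2 := hb.sq_oscillation_le _ (by positivity)
  have h_volume : volume (cubeDilate a ℓ 0) = 3 ^ n * volume (cube n a ℓ) := by
    rw [volume_cubeDilate, pow_zero, one_mul, mul_pow, volume_cube]
  rw [setLAverage_eq, ENNReal.div_le_iff_le_mul (.inl (volume_cubeDilate_ne_zero _ hℓ _))
    (.inl (volume_cubeDilate_ne_top _ _ _)), h_volume,
    ← lintegral_indicator (measurableSet_cubeDilate _ _ _)] at h_sq
  calc _ = ∫⁻ y, (cubeDilate a ℓ 0).indicator (fun y => ‖b y - c‖ₑ ^ 2) y :=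
        lintegral_congr fun y => by
          by_cases hy : y ∈ cubeDilate a ℓ 0 <;> simp [hy]
    _ ≤ _ := h_sq
    _ = _ := by ring

lemma memLp_indicator (hb : HasBMOBound b M) (hℓ : 0 < ℓ) :
    MemLp ((cubeDilate a ℓ 0).indicator fun y => b y - ⨍ z in cubeDilate a ℓ 0, b z) 2 := by
  have h_meas : AEStronglyMeasurable fun y => b y - ⨍ z in cubeDilate a ℓ 0, b z :=
    hb.locallyIntegrable.aestronglyMeasurable.sub aestronglyMeasurable_const
  refine ⟨h_meas.indicator (measurableSet_cubeDilate _ _ _), ?_⟩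
  rw [eLpNorm_lt_top_iff_lintegral_rpow_enorm_lt_top two_ne_zero ENNReal.ofNat_ne_top,
    ENNReal.toReal_ofNat]
  simp_rw [ENNReal.rpow_ofNat]
  have := volume_cube_ne_top a ℓ
  exact (hb.lintegral_enorm_sq_indicator_le hℓ).trans_lt (by finiteness)

lemma setLIntegral_schwartzConv_sub_dyadicAvg_sq_le
    {φ : SchwartzMap (EuclideanSpace ℝ (Fin n)) ℝ} {C : ℝ≥0} {k : ℤ} (hb : HasBMOBound b M)
    (hφ_one : ∫ u, φ u = 1)
    (hφ : ∀ z, ‖z‖ₑ ^ (n + 2) * ‖dilation φ k z‖ₑ ≤ (C * (2 ^ k) ^ 2 : ℝ≥0)) (hk : 2 ^ k ≤ ℓ) :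
    ∫⁻ x in cube n a ℓ, ‖schwartzConv n φ k b x - dyadicAvg n k b x‖ₑ ^ 2 ≤
      2 * (∫⁻ x, ‖∫ y, differenceKernel φ k x y * (cubeDilate a ℓ 0).indicator
        (fun y => b y - ⨍ z in cubeDilate a ℓ 0, b z) y‖ₑ ^ 2) +
      2 * (4 * 12 ^ n * C * M) ^ 2 * volume (cube n a ℓ) * ENNReal.ofReal (2 ^ k / ℓ) := by
  have hℓ : 0 < ℓ := lt_of_lt_of_le (by positivity) hk
  set c := ⨍ z in cubeDilate a ℓ 0, b z
  set T : EuclideanSpace ℝ (Fin n) → ℝ := fun x =>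
    ∫ y, differenceKernel φ k x y * (cubeDilate a ℓ 0).indicator (fun y => b y - c) y
  set t := ENNReal.ofReal (2 ^ k / ℓ)
  have ht : (t ^ 2) ^ 2 ≤ t := by
    rw [← pow_mul]
    exact pow_le_of_le_one zero_le (ENNReal.ofReal_le_one.2 ((div_le_one hℓ).2 hk)) (by norm_num)
  have h_pointwise (x) (hx : x ∈ cube n a ℓ) :
      ‖schwartzConv n φ k b x - dyadicAvg n k b x‖ₑ ^ 2 ≤
        2 * ‖T x‖ₑ ^ 2 + 2 * (4 * 12 ^ n * C * M) ^ 2 * t := by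
    rw [schwartzConv_sub_dyadicAvg_eq φ hφ_one hb.locallyIntegrable (measurableSet_cubeDilate _ _ _)
      (dyadicCubeOf_subset_cubeDilate hx hk)
      (hb.integrable_mul_sub_average hℓ hx (continuous_dilation φ.continuous k) hφ)]
    refine (pow_le_pow_left' (enorm_add_le _ _) 2).trans ((ennreal_add_sq_le _ _).trans ?_)
    rw [mul_assoc 2 (_ ^ 2)]
    gcongr
    refine (pow_le_pow_left' (hb.enorm_setIntegral_compl_cubeDilate_le hℓ hx k hφ) 2).trans ?_
    rw [mul_pow _ (t ^ 2)]
    gcongr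
  calc _ ≤ ∫⁻ x in cube n a ℓ, (2 * ‖T x‖ₑ ^ 2 + 2 * (4 * 12 ^ n * C * M) ^ 2 * t) :=
        setLIntegral_mono' (measurableSet_cube _ _) h_pointwise
    _ = 2 * (∫⁻ x in cube n a ℓ, ‖T x‖ₑ ^ 2) +
          2 * (4 * 12 ^ n * C * M) ^ 2 * t * volume (cube n a ℓ) := by
        rw [lintegral_add_right _ measurable_const, lintegral_const_mul' _ _ ENNReal.ofNat_ne_top,
          setLIntegral_const]
    _ ≤ _ := by
        rw [mul_right_comm _ t]
        gcongr
        exact Measure.restrict_le_self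

end HasBMOBound

theorem exists_tsum_setLIntegral_schwartzConv_sub_dyadicAvg_sq_le {n : ℕ}
    (φ : SchwartzMap (EuclideanSpace ℝ (Fin n)) ℝ) (hφ_one : ∫ u, φ u = 1) :
    ∃ C : ℝ≥0, ∀ (b : EuclideanSpace ℝ (Fin n) → ℝ) (M : ℝ≥0), HasBMOBound b M →
      ∀ (a : EuclideanSpace ℝ (Fin n)) (ℓ : ℝ), 0 < ℓ →
        ∑' k : {k : ℤ // (2 : ℝ) ^ k ≤ ℓ},
          ∫⁻ x in cube n a ℓ, ‖schwartzConv n φ k b x - dyadicAvg n k b x‖ₑ ^ 2 ≤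
            C * M ^ 2 * volume (cube n a ℓ) := by
  obtain ⟨C, hC⟩ := exists_tsum_lintegral_integral_differenceKernel_sq_le φ hφ_one
  obtain ⟨D, hD⟩ := exists_enorm_pow_mul_dilation_le φ 2
  refine ⟨2 * (C * (3 ^ n * (32 + (2 ^ n + 4) ^ 2))) + 4 * (4 * 12 ^ n * D) ^ 2,
    fun b M hb a ℓ hℓ => ?_⟩
  set f := (cubeDilate a ℓ 0).indicator fun y => b y - ⨍ z in cubeDilate a ℓ 0, b z
  set T : ℤ → EuclideanSpace ℝ (Fin n) → ℝ := fun k x => ∫ y, differenceKernel φ k x y * f y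
  set V := volume (cube n a ℓ)
  have h_near : ∑' k : {k : ℤ // (2 : ℝ) ^ k ≤ ℓ}, ∫⁻ x, ‖T k x‖ₑ ^ 2 ≤
      C * (3 ^ n * (32 + (2 ^ n + 4) ^ 2) * M ^ 2 * V) :=
    calc _ ≤ ∑' k : ℤ, ∫⁻ x, ‖T k x‖ₑ ^ 2 :=
          ENNReal.tsum_comp_le_tsum_of_injective Subtype.val_injective fun k => ∫⁻ x, ‖T k x‖ₑ ^ 2
      _ ≤ C * ∫⁻ x, ‖f x‖ₑ ^ 2 := hC f (hb.memLp_indicator hℓ)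
      _ ≤ _ := by
          gcongr
          exact hb.lintegral_enorm_sq_indicator_le hℓ
  calc _ ≤ ∑' k : {k : ℤ // (2 : ℝ) ^ k ≤ ℓ}, (2 * (∫⁻ x, ‖T k x‖ₑ ^ 2) +
          2 * (4 * 12 ^ n * D * M) ^ 2 * V * ENNReal.ofReal (2 ^ (k : ℤ) / ℓ)) :=
        ENNReal.tsum_le_tsum fun k =>
          hb.setLIntegral_schwartzConv_sub_dyadicAvg_sq_le hφ_one (hD k) k.2
    _ ≤ 2 * (C * (3 ^ n * (32 + (2 ^ n + 4) ^ 2) * M ^ 2 * V)) +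
          2 * (4 * 12 ^ n * D * M) ^ 2 * V * 2 := by
        rw [ENNReal.tsum_add, ENNReal.tsum_mul_left, ENNReal.tsum_mul_left]
        gcongr
        exact tsum_ofReal_two_zpow_div_le hℓ
    _ = _ := by
        push_cast
        ring

lemma hasBMOBound_of_setAverage_abs_le {n : ℕ} {b : EuclideanSpace ℝ (Fin n) → ℝ} {M : ℝ}
    (hb : LocallyIntegrable b)
    (h_osc : ∀ (a : EuclideanSpace ℝ (Fin n)) (ℓ : ℝ), 0 < ℓ →
      ⨍ y in cube n a ℓ, |b y - ⨍ z in cube n a ℓ, b z| ≤ M) :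
    HasBMOBound b M.toNNReal := by
  refine ⟨hb, fun a ℓ hℓ => ?_⟩
  have h_int : IntegrableOn (fun y => b y - ⨍ z in cube n a ℓ, b z) (cube n a ℓ) :=
    (integrableOn_cube hb a ℓ).sub (integrableOn_const (volume_cube_ne_top a ℓ))
  rw [setLAverage_eq]
  simp_rw [Real.enorm_eq_ofReal_abs]
  rw [← ofReal_setAverage h_int.abs (.of_forall fun y => abs_nonneg _)]
  exact ENNReal.ofReal_le_ofReal (h_osc a ℓ hℓ)

theorem stmt9 (n : ℕ) (hn : 1 ≤ n)
    (φ : SchwartzMap (EuclideanSpace ℝ (Fin n)) ℝ)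
    -- φ̂(0) = 1, i.e. ∫ φ = 1
    (hφ : ∫ x, φ x = 1) :
    ∃ C : ℝ, 0 < C ∧
      ∀ b : EuclideanSpace ℝ (Fin n) → ℝ, LocallyIntegrable b volume →
      ∀ M : ℝ, 0 ≤ M →
      -- b ∈ BMO with ‖b‖_{BMO} ≤ M
      (∀ (a : EuclideanSpace ℝ (Fin n)) (ℓ : ℝ), 0 < ℓ →
        ⨍ y in cube n a ℓ, |b y - ⨍ z in cube n a ℓ, b z| ≤ M) →
      ∀ (a : EuclideanSpace ℝ (Fin n)) (ℓ : ℝ), 0 < ℓ →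
      ∑' k : {k : ℤ // (2:ℝ) ^ k ≤ ℓ},
          ∫⁻ x in cube n a ℓ,
            ENNReal.ofReal ((schwartzConv n φ k.1 b x - dyadicAvg n k.1 b x) ^ 2)
        ≤ ENNReal.ofReal (C * M ^ 2) * volume (cube n a ℓ) := by
  obtain ⟨C, hC⟩ := exists_tsum_setLIntegral_schwartzConv_sub_dyadicAvg_sq_le φ hφ
  refine ⟨C + 1, by positivity, fun b hb M hM h_osc a ℓ hℓ => ?_⟩
  have h_sq (t : ℝ) : ENNReal.ofReal (t ^ 2) = ‖t‖ₑ ^ 2 := by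
    rw [Real.enorm_eq_ofReal_abs, ← ENNReal.ofReal_pow (abs_nonneg t), sq_abs]
  have h_const : (C : ℝ≥0∞) * M.toNNReal ^ 2 ≤ ENNReal.ofReal ((C + 1) * M ^ 2) := by
    rw [ENNReal.ofReal_mul (by positivity), ENNReal.ofReal_pow hM, ← ENNReal.ofReal_coe_nnreal]
    exact mul_le_mul_left (ENNReal.ofReal_le_ofReal (le_add_of_nonneg_right zero_le_one)) _
  simp_rw [h_sq]
  exact (hC b _ (hasBMOBound_of_setAverage_abs_le hb h_osc) a ℓ hℓ).trans
    (mul_le_mul_left h_const _)
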